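/- Given a 2-graph F with χ(F) = ℓ > r ≥ 2, if F is edge-critical (i.e., there is an edge e of F with χ(F − e) < χ(F)), then for all sufficiently large n, ex(n, H_F^(r)) = t_r(n, ℓ−1). -/

import Mathlib

open Finset

/-- An `r`-graph: a set of edges each of which has exactly `r` vertices. -/
def IsRGraph {α : Type*} (r : ℕ) (G : Finset (Finset α)) : Prop :=
  ∀ e ∈ G, e.card = r

/-- `G` contains a (not necessarily induced) copy of `H`, i.e. a subgraph isomorphic to `H`. -/
def ContainsCopy {α β : Type*} [DecidableEq β]
    (H : Finset (Finset α)) (G : Finset (Finset β)) : Prop :=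
  ∃ f : α → β, Function.Injective f ∧ ∀ e ∈ H, e.image f ∈ G

/-- There is a homomorphism from `H` to `G`. -/
def ContainsHom {α β : Type*} [DecidableEq β]
    (H : Finset (Finset α)) (G : Finset (Finset β)) : Prop :=
  ∃ f : α → β, ∀ e ∈ H, e.image f ∈ G

/-- The Turán number `ex(n, H)` for `r`-graphs: the maximum number of edges in an
`n`-vertex `H`-free `r`-graph. -/
noncomputable def exNum {α : Type*} (r n : ℕ) (H : Finset (Finset α)) : ℕ :=
  sSup {m | ∃ G : Finset (Finset (Fin n)), IsRGraph r G ∧ ¬ ContainsCopy H G ∧ G.card = m}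

/-- The two endpoints of an edge of a simple graph, as a `Finset`. -/
def sym2ToFinset {α : Type*} [Fintype α] [DecidableEq α] (e : Sym2 α) : Finset α :=
  Finset.univ.filter (· ∈ e)

/-- The expansion `H_F^(r)` of a 2-graph `F`: each edge of `F` is enlarged with a new set of
`r - 2` vertices, distinct edges getting disjoint sets of new vertices. -/
def expansion {α : Type*} [Fintype α] [DecidableEq α] (r : ℕ)
    (F : SimpleGraph α) [DecidableRel F.Adj] :
    Finset (Finset (α ⊕ (F.edgeFinset × Fin (r - 2)))) :=
  F.edgeFinset.attach.image (fun e =>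
    (sym2ToFinset e.1).image Sum.inl ∪
      (Finset.univ : Finset (Fin (r - 2))).image (fun i => Sum.inr (e, i)))

/-- The complete balanced `l`-partite `r`-graph `T_r(n, l)` on vertex set `Fin n`,
with vertex classes the residue classes modulo `l` (which differ in size by at most 1):
its edges are all `r`-sets meeting each class in at most one vertex. -/
def turanGraph (r n l : ℕ) : Finset (Finset (Fin n)) :=
  (Finset.univ.powersetCard r).filter
    (fun e => ∀ u ∈ e, ∀ v ∈ e, (u : ℕ) % l = (v : ℕ) % l → u = v)

/-- `t_r(n, l)`, the number of edges of `T_r(n, l)`. -/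
def turanNum (r n l : ℕ) : ℕ := (turanGraph r n l).card

/-- Two `r`-graphs on `Fin n` are `ε`-close if some relabelling of the first one has
symmetric difference at most `ε·C(n,r)` with the second one. -/
def EpsClose (r n : ℕ) (ε : ℝ) (G₁ G₂ : Finset (Finset (Fin n))) : Prop :=
  ∃ σ : Fin n ≃ Fin n,
    ((((G₁.image fun e => e.image σ) \ G₂) ∪ (G₂ \ (G₁.image fun e => e.image σ))).card : ℝ)
      ≤ ε * (n.choose r)

/-- `G` contains a member of the decomposition family `𝓕_F` (w.r.t. proper `ℓ`-colourings of
`F`) as a subgraph, with all its vertices placed inside `S`.  A member of `𝓕_F` is obtained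
from `F` by deleting the vertices of `ℓ - 2` colour classes of a proper `ℓ`-colouring of `F`. -/
def ContainsDecompMemberOn {α β : Type*} [DecidableEq β] (ℓ : ℕ) (F : SimpleGraph α)
    (G : Finset (Finset β)) (S : Set β) : Prop :=
  ∃ c : α → Fin ℓ, (∀ ⦃u v⦄, F.Adj u v → c u ≠ c v) ∧
    ∃ i j : Fin ℓ, i ≠ j ∧
      ∃ f : {v : α // c v = i ∨ c v = j} → β, Function.Injective f ∧
        (∀ v, f v ∈ S) ∧
        ∀ u v : {v : α // c v = i ∨ c v = j}, F.Adj u.1 v.1 → ({f u, f v} : Finset β) ∈ G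

/-- `biex(n, F) = ex(n, 𝓕_F)`: the maximum number of edges in an `n`-vertex 2-graph containing
no member of the decomposition family of `F` (w.r.t. proper `ℓ`-colourings) as a subgraph. -/
noncomputable def biex {α : Type*} (ℓ : ℕ) (F : SimpleGraph α) (n : ℕ) : ℕ :=
  sSup {m | ∃ G : Finset (Finset (Fin n)), IsRGraph 2 G ∧
    ¬ ContainsDecompMemberOn ℓ F G Set.univ ∧ G.card = m}

/-- The Lagrangian of an `r`-graph `G`:
`λ(G) = max { Σ_{e ∈ G} Π_{i ∈ e} w i }` over all legal weightings `w`. -/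
noncomputable def lagrangian {α : Type*} [Fintype α] (G : Finset (Finset α)) : ℝ :=
  sSup {x : ℝ | ∃ w : α → ℝ, (∀ i, 0 ≤ w i) ∧ (∑ i, w i) = 1 ∧
    x = ∑ e ∈ G, ∏ i ∈ e, w i}

/-- neighbourhood as a finset -/
noncomputable def nbr {V : Type} [Fintype V] (S : SimpleGraph V) (v : V) : Finset V := by
  classical exact Finset.univ.filter (fun w => S.Adj v w)

theorem mem_nbr {V : Type} [Fintype V] (S : SimpleGraph V) (v w : V) :
    w ∈ nbr S v ↔ S.Adj v w := by
  classical simp [nbr]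

/-- cliques of size t inside U -/
noncomputable def cl {V : Type} [Fintype V] (S : SimpleGraph V) (U : Finset V) (t : ℕ) :
    Finset (Finset V) := by
  classical exact (U.powersetCard t).filter (fun T => ∀ x ∈ T, ∀ y ∈ T, x ≠ y → S.Adj x y)

theorem mem_cl {V : Type} [Fintype V] (S : SimpleGraph V) (U : Finset V) (t : ℕ) (T : Finset V) :
    T ∈ cl S U t ↔ T ⊆ U ∧ T.card = t ∧ ∀ x ∈ T, ∀ y ∈ T, x ≠ y → S.Adj x y := by
  classical simp [cl, Finset.mem_powersetCard, and_assoc]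

/-- common neighbours in U -/
noncomputable def cn {V : Type} [Fintype V] (S : SimpleGraph V) (U : Finset V) (T : Finset V) :
    Finset V := by
  classical exact U.filter (fun y => ∀ x ∈ T, S.Adj x y)

theorem mem_cn {V : Type} [Fintype V] (S : SimpleGraph V) (U : Finset V) (T : Finset V) (y : V) :
    y ∈ cn S U T ↔ y ∈ U ∧ ∀ x ∈ T, S.Adj x y := by
  classical simp [cn]

theorem cl_double {V : Type} [Fintype V] [DecidableEq V] (S : SimpleGraph V) (U : Finset V) (t : ℕ)
    (f : Finset V → ℕ) :
    ∑ T ∈ cl S U (t+1), ∑ x ∈ T, f (T.erase x) = ∑ R ∈ cl S U t, (cn S U R).card * f R := by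
  have h2 : ∀ R ∈ cl S U t, (cn S U R).card * f R = ∑ x ∈ cn S U R, f R := by
    intro R _; simp
  rw [Finset.sum_congr rfl h2, Finset.sum_sigma', Finset.sum_sigma']
  refine Finset.sum_bij' (fun p _ => ⟨p.1.erase p.2, p.2⟩) (fun p _ => ⟨insert p.2 p.1, p.2⟩)
    ?_ ?_ ?_ ?_ ?_
  · rintro ⟨T, x⟩ h
    simp only [Finset.mem_sigma, mem_cl, mem_cn] at h ⊢
    obtain ⟨⟨h1, h2, h3⟩, hx⟩ := h
    refine ⟨⟨(Finset.erase_subset _ _).trans h1, ?_, ?_⟩, h1 hx, ?_⟩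
    · rw [Finset.card_erase_of_mem hx, h2]; rfl
    · intro a ha b hb; exact h3 a (Finset.mem_of_mem_erase ha) b (Finset.mem_of_mem_erase hb)
    · intro a ha
      exact h3 a (Finset.mem_of_mem_erase ha) x hx (Finset.ne_of_mem_erase ha)
  · rintro ⟨R, x⟩ h
    simp only [Finset.mem_sigma, mem_cl, mem_cn] at h ⊢
    obtain ⟨⟨h1, h2, h3⟩, hx, hx2⟩ := h
    have hxR : x ∉ R := fun hh => (hx2 x hh).ne rfl
    refine ⟨⟨Finset.insert_subset hx h1, by rw [Finset.card_insert_of_notMem hxR, h2], ?_⟩, by simp⟩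
    intro a ha b hb hab
    rw [Finset.mem_insert] at ha hb
    rcases ha with rfl | ha <;> rcases hb with rfl | hb
    · exact absurd rfl hab
    · exact (hx2 b hb).symm
    · exact hx2 a ha
    · exact h3 a ha b hb hab
  · rintro ⟨T, x⟩ h
    simp only [Finset.mem_sigma] at h
    simp [Finset.insert_erase h.2]
  · rintro ⟨R, x⟩ h
    simp only [Finset.mem_sigma, mem_cl, mem_cn] at h
    have hxR : x ∉ R := fun hh => (h.2.2 x hh).ne rfl
    simp [Finset.erase_insert hxR]
  · rintro ⟨T, x⟩ h; rfl

theorem cl_sum_cn {V : Type} [Fintype V] [DecidableEq V] (S : SimpleGraph V) (U : Finset V) (t : ℕ) :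
    ∑ R ∈ cl S U t, (cn S U R).card = (t+1) * (cl S U (t+1)).card := by
  have := cl_double S U t (fun _ => 1)
  simp only [Finset.sum_const, smul_eq_mul, mul_one] at this
  rw [← this, Finset.sum_congr rfl (g := fun _ => t+1), Finset.sum_const, smul_eq_mul, mul_comm]
  intro T hT
  exact ((mem_cl _ _ _ _).1 hT).2.1

theorem cn_bound {V : Type} [Fintype V] [DecidableEq V] (S : SimpleGraph V) (U : Finset V) (t : ℕ)
    (T : Finset V) (hT : T ∈ cl S U (t+1)) :
    ∑ x ∈ T, (cn S U (T.erase x)).card ≤ U.card + t * (cn S U T).card := by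
  classical
  have h0 : ∀ x ∈ T, (cn S U (T.erase x)).card =
      ∑ y ∈ U, if (∀ z ∈ T.erase x, S.Adj z y) then 1 else 0 := by
    intro x _; rw [← Finset.card_filter]; congr 1; ext; simp [mem_cn]
  have h1 : (cn S U T).card = ∑ y ∈ U, if (∀ z ∈ T, S.Adj z y) then 1 else 0 := by
    rw [← Finset.card_filter]; congr 1; ext; simp [mem_cn]
  rw [Finset.sum_congr rfl h0, Finset.sum_comm, h1, Finset.card_eq_sum_ones, Finset.mul_sum,
    ← Finset.sum_add_distrib]
  apply Finset.sum_le_sum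
  intro y hy
  rw [← Finset.card_filter]
  by_cases h : ∀ z ∈ T, S.Adj z y
  · rw [if_pos h]
    refine (Finset.card_filter_le _ _).trans ?_
    rw [((mem_cl _ _ _ _).1 hT).2.1]; omega
  · rw [if_neg h]
    simp only [mul_zero, add_zero]
    push Not at h
    obtain ⟨w, hw, hwy⟩ := h
    rw [Finset.card_le_one]
    intro a ha b hb
    simp only [Finset.mem_filter, Finset.mem_erase] at ha hb
    have e1 : a = w := by
      by_contra hne; exact hwy (ha.2 w ⟨fun h => hne h.symm, hw⟩)
    have e2 : b = w := by
      by_contra hne; exact hwy (hb.2 w ⟨fun h => hne h.symm, hw⟩)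
    rw [e1, e2]

theorem moon_moser {V : Type} [Fintype V] [DecidableEq V] (S : SimpleGraph V) (U : Finset V) (t : ℕ) :
    ((t+1) * (cl S U (t+1)).card)^2 ≤ (cl S U t).card *
      (U.card * (cl S U (t+1)).card + t * ((t+2) * (cl S U (t+2)).card)) := by
  rw [← cl_sum_cn]
  refine (sq_sum_le_card_mul_sum_sq).trans ?_
  apply Nat.mul_le_mul_left
  have h := cl_double S U t (fun R => (cn S U R).card)
  simp only [sq]
  rw [← h]
  refine (Finset.sum_le_sum (fun T hT => cn_bound S U t T hT)).trans ?_
  rw [Finset.sum_add_distrib, ← Finset.mul_sum, cl_sum_cn]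
  simp only [Finset.sum_const, smul_eq_mul]
  apply le_of_eq; ring

theorem card_cl_le {V : Type} [Fintype V] (S : SimpleGraph V) (U : Finset V) (t : ℕ) :
    (cl S U t).card ≤ Fintype.card V ^ t := by
  classical
  have : cl S U t ⊆ (Finset.univ : Finset V).powersetCard t := by
    intro T hT; rw [Finset.mem_powersetCard]; exact ⟨Finset.subset_univ _, ((mem_cl _ _ _ _).1 hT).2.1⟩
  refine (Finset.card_le_card this).trans ?_
  rw [Finset.card_powersetCard, Finset.card_univ]
  exact Nat.choose_le_pow _ _

/-- one step -/
def Stp {V : Type} [Fintype V] (S : SimpleGraph V) (U : Finset V) (k t : ℕ) (ε : ℝ) : Prop :=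
  ((t:ℝ)+1) * (cl S U (t+1)).card ≤ U.card * (1 - t / k) * (cl S U t).card
    + ε * (Fintype.card V : ℝ)^(t+1)

theorem stp_down {V : Type} [Fintype V] (S : SimpleGraph V) (U : Finset V) (k t : ℕ)
    (hk : 1 ≤ k) (htk : t ≤ k)
    (ε δ : ℝ) (hδ : 0 < δ) (hε : t * ε ≤ δ^2) (h : Stp S U k (t+1) ε) :
    Stp S U k t δ := by
  classical
  unfold Stp at *
  have mm : (((t:ℝ)+1) * (cl S U (t+1)).card)^2 ≤ (cl S U t).card *
      (U.card * (cl S U (t+1)).card + t * ((t+2) * (cl S U (t+2)).card)) := by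
    exact_mod_cast moon_moser S U t
  have hc : ((cl S U t).card : ℝ) ≤ (Fintype.card V : ℝ)^t := by exact_mod_cast card_cl_le S U t
  have hkpos : (0:ℝ) < k := by exact_mod_cast hk
  set N : ℝ := (Fintype.card V : ℝ)
  have hN : 0 ≤ N := by positivity
  set c0 : ℝ := ((cl S U t).card : ℝ)
  set c1 : ℝ := ((cl S U (t+1)).card : ℝ)
  have hc0 : 0 ≤ c0 := by positivity
  have hc1 : 0 ≤ c1 := by positivity
  set m : ℝ := (U.card : ℝ)
  push_cast at h
  have e2 : (t:ℝ) + 1 + 1 = t + 2 := by ring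
  rw [e2] at h
  set c2 : ℝ := ((cl S U (t+1+1)).card : ℝ) with hc2
  set X := ((t:ℝ)+1) * c1 with hX
  have hX0 : 0 ≤ X := by positivity
  set a := m * (1 - t / k) * c0 with ha
  have key : X^2 ≤ a * X + (δ * N^(t+1))^2 := by
    have h1 : (t:ℝ) * ((t+2) * c2) ≤ t * (m * (1 - (t + 1) / k) * c1 + ε * N^(t+1+1)) := by
      gcongr
    have h2 : X^2 ≤ c0 * (m * c1 + t * (m * (1 - (t + 1) / k) * c1 + ε * N^(t+1+1))) :=
      mm.trans (by gcongr)
    have h3 : c0 * (m * c1 + t * (m * (1 - (t + 1) / k) * c1 + ε * N^(t+1+1))) =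
      a * X + c0 * (t * ε * N^(t+2)) := by
      rw [ha, hX]; field_simp; ring
    have h4 : c0 * (t * ε * N^(t+2)) ≤ (δ * N^(t+1))^2 := by
      calc c0 * (t * ε * N^(t+2)) ≤ c0 * (δ^2 * N^(t+2)) := by gcongr
        _ ≤ N^t * (δ^2 * N^(t+2)) := by gcongr
        _ = _ := by ring
    linarith
  have hb : 0 ≤ δ * N^(t+1) := by positivity
  set b := δ * N^(t+1)
  have ha0 : 0 ≤ a := by
    have : (t:ℝ)/k ≤ 1 := by rw [div_le_one hkpos]; exact_mod_cast htk
    have : 0 ≤ 1 - (t:ℝ)/k := by linarith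
    positivity
  by_contra hcon
  push Not at hcon
  nlinarith

theorem stp_all {V : Type} [Fintype V] (S : SimpleGraph V) (U : Finset V) (k t : ℕ)
    (ε : ℝ) (δ : ℝ) (h : ε ≤ δ) (hs : Stp S U k t ε) : Stp S U k t δ := by
  unfold Stp at *
  refine hs.trans ?_
  gcongr

theorem stp_exists (k : ℕ) (hk : 1 ≤ k) (ε : ℝ) (hε : 0 < ε) (d : ℕ) (hd : d ≤ k) :
    ∃ η > 0, ∀ (V : Type) [Fintype V] (S : SimpleGraph V) (U : Finset V),
      ((cl S U (k+1)).card : ℝ) ≤ η * (Fintype.card V : ℝ)^(k+1) →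
      ∀ t, k - d ≤ t → t ≤ k → Stp S U k t ε := by
  induction d generalizing ε with
  | zero =>
    refine ⟨ε / (k+1), by positivity, ?_⟩
    intro V _ S U h t h1 h2
    have : t = k := by omega
    subst this
    unfold Stp
    have hkpos : (0:ℝ) < t := by exact_mod_cast hk
    rw [div_self hkpos.ne']
    have : ((t:ℝ)+1) * (cl S U (t+1)).card ≤ ((t:ℝ)+1) * (ε / (t+1) * (Fintype.card V : ℝ)^(t+1)) := by
      gcongr
    refine this.trans (le_of_eq ?_)
    field_simp; ring
  | succ d ih =>
    set ε' := min ε (ε^2 / (k+1)) with hε'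
    have hp : 0 < ε' := by apply lt_min hε; positivity
    obtain ⟨η, hη, H⟩ := ih ε' hp (by omega)
    refine ⟨η, hη, ?_⟩
    intro V _ S U h t h1 h2
    by_cases ht : k - d ≤ t
    · exact stp_all S U k t ε' ε (min_le_left _ _) (H V S U h t ht h2)
    · have h3 := H V S U h (t+1) (by omega) (by omega)
      refine stp_down S U k t hk h2 ε' ε hε ?_ h3
      have : ε' ≤ ε^2/(k+1) := min_le_right _ _
      have htk : (t:ℝ) ≤ k + 1 := by exact_mod_cast (by omega : t ≤ k+1)
      calc (t:ℝ) * ε' ≤ (k+1) * (ε^2/(k+1)) := by gcongr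
        _ = ε^2 := by field_simp

theorem cl_bound (k : ℕ) (hk : 1 ≤ k) (r : ℕ) (hr : r ≤ k + 1) (ε : ℝ) (hε : 0 < ε) :
    ∃ η > 0, ∀ (V : Type) [Fintype V] (S : SimpleGraph V) (U : Finset V),
      ((cl S U (k+1)).card : ℝ) ≤ η * (Fintype.card V : ℝ)^(k+1) →
      ((cl S U r).card : ℝ) ≤ (k.choose r) * ((U.card : ℝ)/k)^r + ε * (Fintype.card V : ℝ)^r := by
  obtain ⟨η, hη, H⟩ := stp_exists k hk (ε/(k+1)) (by positivity) k le_rfl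
  refine ⟨η, hη, ?_⟩
  intro V _ S U h
  have H' := H V S U h
  set N : ℝ := (Fintype.card V : ℝ) with hN
  have hm : (U.card : ℝ) ≤ N := by rw [hN]; exact_mod_cast Finset.card_le_univ U
  set m : ℝ := (U.card : ℝ) with hmdef
  have hm0 : 0 ≤ m := by positivity
  have hN0 : 0 ≤ N := by positivity
  have hkpos : (0:ℝ) < k := by exact_mod_cast hk
  set δ := ε/(k+1) with hδ
  have hδ0 : 0 < δ := by positivity
  have main : ∀ r, r ≤ k+1 → ((cl S U r).card : ℝ) ≤ (k.choose r) * (m/k)^r + r * δ * N^r := by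
    intro r
    induction r with
    | zero =>
      intro _
      have : ((cl S U 0).card : ℝ) ≤ (Fintype.card V : ℝ)^0 := by exact_mod_cast card_cl_le S U 0
      simpa using this
    | succ r ih =>
      intro hr
      have h1 := ih (by omega)
      have h2 := H' r (by omega) (by omega)
      unfold Stp at h2
      have hrk : (r:ℝ)/k ≤ 1 := by rw [div_le_one hkpos]; exact_mod_cast (by omega : r ≤ k)
      have hrk' : 0 ≤ 1 - (r:ℝ)/k := by linarith
      have h3 : (k.choose (r+1) : ℝ) * (r+1) = k.choose r * (k - r) := by
        have := Nat.choose_succ_right_eq k r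
        have h4 : ((k - r : ℕ) : ℝ) = k - r := by push_cast [Nat.cast_sub (by omega : r ≤ k)]; ring
        rw [← h4]; exact_mod_cast this
      have h5 : m * (1 - r/k) * (cl S U r).card ≤ m * (1-r/k) * ((k.choose r) * (m/k)^r + r * δ * N^r) := by
        gcongr
      have h6 : m * (1-r/k) * ((k.choose r) * (m/k)^r) = (k.choose (r+1)) * (r+1) * (m/k)^(r+1) := by
        rw [h3, pow_succ]; field_simp
      have h7 : m * (1-r/k) * (r * δ * N^r) ≤ r * δ * N^(r+1) := by
        have : m * (1 - r/k) ≤ N * 1 := by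
          gcongr
          have : 0 ≤ (r:ℝ)/k := by positivity
          linarith
        calc m * (1-r/k) * (r * δ * N^r) ≤ N * 1 * (r * δ * N^r) := by gcongr
          _ = _ := by ring
      have h8 : 0 ≤ (r:ℝ) * (r * δ * N^(r+1)) := by positivity
      have h9 : 0 ≤ (r:ℝ) * (δ * N^(r+1)) := by positivity
      have h10 : ((r:ℝ)+1) * (cl S U (r+1)).card ≤ (r+1) * ((k.choose (r+1)) * (m/k)^(r+1) + ((r+1:ℕ):ℝ) * δ * N^(r+1)) := by
        push_cast
        nlinarith
      exact le_of_mul_le_mul_left h10 (by positivity)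
  refine (main r hr).trans ?_
  have : (r:ℝ) * δ ≤ ε := by
    have : (r:ℝ) ≤ k+1 := by exact_mod_cast hr
    calc (r:ℝ) * δ ≤ (k+1) * δ := by gcongr
      _ = ε := by rw [hδ]; field_simp
  gcongr

theorem box_step (V : Type) [Fintype V] [DecidableEq V] (t d : ℕ) (ε : ℝ) (hε : 0 < ε)
    (hn : (4 * t : ℝ) ≤ ε * Fintype.card V) (hn1 : 1 ≤ Fintype.card V)
    (E : Finset (Fin (d+1) → V)) (hE : ε * (Fintype.card V : ℝ)^(d+1) ≤ E.card) :
    ∃ A : Finset V, A.card = t ∧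
      (ε/2 * ((ε/4)^t / t.factorial)) * (Fintype.card V : ℝ)^d ≤
        (((Finset.univ : Finset (Fin d → V)).filter
          (fun w => ∀ x ∈ A, (Fin.cons x w : Fin (d+1) → V) ∈ E)).card : ℝ) := by
  classical
  set N : ℝ := (Fintype.card V : ℝ) with hN
  have hN1 : (1:ℝ) ≤ N := by rw [hN]; exact_mod_cast hn1
  have hN0 : 0 < N := by linarith
  let D : (Fin d → V) → Finset V := fun w =>
    Finset.univ.filter (fun x => (Fin.cons x w : Fin (d+1) → V) ∈ E)
  have hsum : ∑ w : Fin d → V, (D w).card = E.card := by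
    rw [← Finset.card_sigma]
    refine Finset.card_bij' (fun p _ => (Fin.cons p.2 p.1 : Fin (d+1) → V))
      (fun f _ => ⟨Fin.tail f, f 0⟩) ?_ ?_ ?_ ?_
    · rintro ⟨w, x⟩ h; simpa [D] using h
    · intro f h; simpa [D] using h
    · rintro ⟨w, x⟩ h; simp
    · intro f h; simp
  have hcardW : ((Finset.univ : Finset (Fin d → V)).card : ℝ) = N^d := by
    rw [Finset.card_univ, Fintype.card_fun, Fintype.card_fin]; push_cast; rfl
  set W' := (Finset.univ : Finset (Fin d → V)).filter (fun w => ε / 2 * N ≤ (D w).card) with hW'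
  have hW'card : ε/2 * N^d ≤ (W'.card : ℝ) := by
    have h1 : (E.card : ℝ) ≤ ∑ w : Fin d → V, (ε/2 * N + if ε / 2 * N ≤ (D w).card then N else 0) := by
      rw [← hsum]; push_cast
      apply Finset.sum_le_sum
      intro w _
      split_ifs with h
      · have : ((D w).card : ℝ) ≤ N := by rw [hN]; exact_mod_cast Finset.card_le_univ _
        have : 0 ≤ ε/2*N := by positivity
        linarith
      · push Not at h; linarith
    rw [Finset.sum_add_distrib, Finset.sum_const, ← Finset.sum_filter, Finset.sum_const,
      nsmul_eq_mul, nsmul_eq_mul, hcardW] at h1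
    have h2 : ε * N^(d+1) ≤ N^d * (ε/2*N) + W'.card * N := hE.trans h1
    have h3 : ε/2 * N^d * N ≤ W'.card * N := by
      have : ε * N^(d+1) = ε * N^d * N := by ring
      nlinarith
    exact le_of_mul_le_mul_right h3 hN0
  set P := (Finset.univ : Finset V).powersetCard t with hP
  have hch : ∀ w ∈ W', (ε/4)^t / t.factorial * N^t ≤ (((D w).powersetCard t).card : ℝ) := by
    intro w hw
    rw [Finset.card_powersetCard]
    have h1 : ε / 2 * N ≤ (D w).card := (Finset.mem_filter.1 hw).2
    refine le_trans ?_ (Nat.pow_le_choose t (D w).card)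
    rw [div_mul_eq_mul_div, ← mul_pow]
    have h2 : t ≤ (D w).card := by
      have : (t:ℝ) ≤ (D w).card := by
        have : (0:ℝ) ≤ t := by positivity
        linarith
      exact_mod_cast this
    have h3 : (((D w).card + 1 - t : ℕ) : ℝ) = (D w).card + 1 - t := by
      rw [Nat.cast_sub (by omega)]; push_cast; ring
    have h4 : ε/4 * N ≤ (((D w).card + 1 - t : ℕ) : ℝ) := by rw [h3]; linarith
    gcongr
  have hdc : ∑ A ∈ P, (((Finset.univ : Finset (Fin d → V)).filter
          (fun w => ∀ x ∈ A, (Fin.cons x w : Fin (d+1) → V) ∈ E)).card) =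
      ∑ w : Fin d → V, ((D w).powersetCard t).card := by
    simp_rw [Finset.card_filter]
    rw [Finset.sum_comm]
    apply Finset.sum_congr rfl
    intro w _
    rw [← Finset.card_filter]
    congr 1
    ext A
    simp only [hP, Finset.mem_filter, Finset.mem_powersetCard, true_and, D,
      Finset.subset_iff, Finset.mem_univ]
    tauto
  set c := (ε/4)^t / (t.factorial : ℝ) with hc
  have hc0 : 0 < c := by positivity
  have hlow : ε/2 * c * N^d * N^t ≤ ∑ A ∈ P, (((Finset.univ : Finset (Fin d → V)).filter
          (fun w => ∀ x ∈ A, (Fin.cons x w : Fin (d+1) → V) ∈ E)).card : ℝ) := by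
    have : (∑ w : Fin d → V, (((D w).powersetCard t).card : ℝ)) ≥ ∑ w ∈ W', c * N^t :=
      calc (∑ w : Fin d → V, (((D w).powersetCard t).card : ℝ)) ≥ ∑ w ∈ W', (((D w).powersetCard t).card : ℝ) := by
            apply Finset.sum_le_sum_of_subset_of_nonneg (Finset.subset_univ _)
            intros; positivity
        _ ≥ _ := Finset.sum_le_sum hch
    rw [Finset.sum_const, nsmul_eq_mul] at this
    have h2 : ε/2 * N^d * (c * N^t) ≤ W'.card * (c * N^t) := by gcongr
    have h3 : (∑ A ∈ P, (((Finset.univ : Finset (Fin d → V)).filter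
          (fun w => ∀ x ∈ A, (Fin.cons x w : Fin (d+1) → V) ∈ E)).card : ℝ)) =
      ∑ w : Fin d → V, (((D w).powersetCard t).card : ℝ) := by exact_mod_cast hdc
    rw [h3]
    nlinarith
  by_contra hcon
  push Not at hcon
  have hPN : (P.card : ℝ) ≤ N^t := by
    rw [hP, Finset.card_powersetCard, Finset.card_univ]; rw [hN]
    exact_mod_cast Nat.choose_le_pow _ _
  have hPne : P.Nonempty := by
    rw [hP, Finset.powersetCard_nonempty, Finset.card_univ]
    by_contra hlt
    push Not at hlt
    have : P.card = 0 := by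
      rw [hP, Finset.card_powersetCard, Finset.card_univ]; exact Nat.choose_eq_zero_of_lt hlt
    rw [Finset.card_eq_zero] at this
    rw [this] at hlow
    simp only [Finset.sum_empty] at hlow
    have : 0 < ε/2 * c * N^d * N^t := by positivity
    linarith
  have : (∑ A ∈ P, (((Finset.univ : Finset (Fin d → V)).filter
          (fun w => ∀ x ∈ A, (Fin.cons x w : Fin (d+1) → V) ∈ E)).card : ℝ)) <
      ∑ A ∈ P, ε/2 * c * N^d := by
    apply Finset.sum_lt_sum_of_nonempty hPne
    intro A hA
    exact hcon A (Finset.mem_powersetCard.1 hA).2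
  rw [Finset.sum_const, nsmul_eq_mul] at this
  have h5 : P.card * (ε/2 * c * N^d) ≤ N^t * (ε/2 * c * N^d) := by gcongr
  nlinarith

theorem box (t d : ℕ) : ∀ ε : ℝ, 0 < ε → ∃ n0 : ℕ, ∀ (V : Type) [Fintype V] [DecidableEq V],
    n0 ≤ Fintype.card V → ∀ E : Finset (Fin d → V), ε * (Fintype.card V : ℝ)^d ≤ E.card →
    ∃ A : Fin d → Finset V, (∀ i, (A i).card = t) ∧ ∀ f : Fin d → V, (∀ i, f i ∈ A i) → f ∈ E := by
  induction d with
  | zero =>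
    intro ε hε
    refine ⟨0, ?_⟩
    intro V _ _ _ E hE
    refine ⟨fun i => i.elim0, fun i => i.elim0, ?_⟩
    intro f _
    have : 0 < E.card := by
      have : (0:ℝ) < E.card := by simp at hE; linarith
      exact_mod_cast this
    obtain ⟨g, hg⟩ := Finset.card_pos.1 this
    rwa [Subsingleton.elim f g]
  | succ d ih =>
    intro ε hε
    obtain ⟨n1, h1⟩ := ih (ε/2 * ((ε/4)^t / t.factorial)) (by positivity)
    obtain ⟨n2, hn2⟩ := exists_nat_ge (4 * t / ε)
    refine ⟨max n1 (max n2 1), ?_⟩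
    intro V _ _ hn E hE
    have hn2' : n2 ≤ Fintype.card V := by omega
    obtain ⟨A0, hA0, hbig⟩ := box_step V t d ε hε (by
      have : (n2:ℝ) ≤ Fintype.card V := by exact_mod_cast hn2'
      have := hn2.trans this
      rw [div_le_iff₀ hε] at this
      linarith) (by omega) E hE
    obtain ⟨A, hA, hAE⟩ := h1 V (by omega) _ hbig
    refine ⟨Fin.cons A0 A, ?_, ?_⟩
    · intro i
      refine Fin.cases ?_ ?_ i
      · simpa using hA0
      · intro j; simpa using hA j
    · intro f hf
      have h2 := hAE (Fin.tail f) (fun i => by simpa [Fin.tail] using hf i.succ)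
      have h3 := (Finset.mem_filter.1 h2).2 (f 0) (by simpa using hf 0)
      simpa using h3

theorem clique_box (k t : ℕ) (ht : 1 ≤ t) (η : ℝ) (hη : 0 < η) :
    ∃ n0 : ℕ, ∀ (V : Type) [Fintype V] [DecidableEq V] (S : SimpleGraph V) (U : Finset V),
    n0 ≤ Fintype.card V → η * (Fintype.card V : ℝ)^k < (cl S U k).card →
    ∃ A : Fin k → Finset V, (∀ i, A i ⊆ U) ∧ (∀ i, (A i).card = t) ∧
      ∀ i j, i ≠ j → ∀ x ∈ A i, ∀ y ∈ A j, S.Adj x y := by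
  classical
  obtain ⟨n0, h0⟩ := box t k η hη
  refine ⟨n0, ?_⟩
  intro V _ _ S U hn hc
  set E : Finset (Fin k → V) := Finset.univ.filter
    (fun f => (∀ i, f i ∈ U) ∧ ∀ i j, i ≠ j → S.Adj (f i) (f j)) with hE
  have hle : (cl S U k).card ≤ E.card := by
    have : cl S U k ⊆ E.image (fun f => Finset.univ.image f) := by
      intro T hT
      rw [mem_cl] at hT
      obtain ⟨h1, h2, h3⟩ := hT
      rw [Finset.mem_image]
      let e := (Finset.equivFinOfCardEq h2).symm
      refine ⟨fun i => (e i : V), ?_, ?_⟩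
      · simp only [hE, Finset.mem_filter, Finset.mem_univ, true_and]
        refine ⟨fun i => h1 (e i).2, fun i j hij => h3 _ (e i).2 _ (e j).2 ?_⟩
        intro h; exact hij (e.injective (Subtype.ext h))
      · ext x
        simp only [Finset.mem_image, Finset.mem_univ, true_and]
        constructor
        · rintro ⟨i, rfl⟩; exact (e i).2
        · intro hx; exact ⟨e.symm ⟨x, hx⟩, by simp⟩
    exact (Finset.card_le_card this).trans Finset.card_image_le
  have hle' : ((cl S U k).card : ℝ) ≤ E.card := by exact_mod_cast hle
  obtain ⟨A, hA, hAE⟩ := h0 V hn E (by linarith)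
  have hne : ∀ i, (A i).Nonempty := fun i => Finset.card_pos.1 (by rw [hA i]; omega)
  choose g hg using hne
  refine ⟨A, ?_, hA, ?_⟩
  · intro i x hx
    have h1 := hAE (Function.update g i x) (by
      intro j
      by_cases hj : j = i
      · subst hj; simpa using hx
      · simpa [Function.update_of_ne hj] using hg j)
    have := (Finset.mem_filter.1 h1).2.1 i
    simpa using this
  · intro i j hij x hx y hy
    have h1 := hAE (Function.update (Function.update g i x) j y) (by
      intro l
      by_cases hl : l = j
      · subst hl; simpa using hy
      · rw [Function.update_of_ne hl]
        by_cases hl' : l = i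
        · subst hl'; simpa using hx
        · simpa [Function.update_of_ne hl'] using hg l)
    have := (Finset.mem_filter.1 h1).2.2 i j hij
    simpa [Function.update_of_ne hij] using this

/-- supersaturated generalized Turan bound -/
theorem turan_count (k : ℕ) (hk : 1 ≤ k) (r : ℕ) (hr : r ≤ k + 1) (t : ℕ) (ht : 1 ≤ t)
    (ε : ℝ) (hε : 0 < ε) :
    ∃ n0 : ℕ, ∀ (V : Type) [Fintype V] [DecidableEq V] (S : SimpleGraph V) (U : Finset V),
    n0 ≤ Fintype.card V →
    (¬ ∃ A : Fin (k+1) → Finset V, (∀ i, A i ⊆ U) ∧ (∀ i, (A i).card = t) ∧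
      ∀ i j, i ≠ j → ∀ x ∈ A i, ∀ y ∈ A j, S.Adj x y) →
    ((cl S U r).card : ℝ) ≤ (k.choose r) * ((U.card : ℝ)/k)^r + ε * (Fintype.card V : ℝ)^r := by
  obtain ⟨η, hη, H⟩ := cl_bound k hk r hr ε hε
  obtain ⟨n0, h0⟩ := clique_box (k+1) t ht η hη
  refine ⟨n0, ?_⟩
  intro V _ _ S U hn hno
  apply H
  by_contra hcon
  push Not at hcon
  exact hno (h0 V S U hn hcon)

/-- elementary symmetric sums over naturals -/
def es {ι : Type} [DecidableEq ι] (s : Finset ι) (r : ℕ) (y : ι → ℕ) : ℕ :=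
  ∑ J ∈ s.powersetCard r, ∏ j ∈ J, y j

theorem es_insert {ι : Type} [DecidableEq ι] (s : Finset ι) (c : ι) (hc : c ∉ s) (r : ℕ) (y : ι → ℕ) :
    es (insert c s) (r+1) y = es s (r+1) y + y c * es s r y := by
  unfold es
  rw [Finset.powersetCard_succ_insert hc, Finset.sum_union, Finset.sum_image, Finset.mul_sum]
  · congr 1
    apply Finset.sum_congr rfl
    intro J hJ
    rw [Finset.prod_insert]
    intro h; exact hc ((Finset.mem_powersetCard.1 hJ).1 h)
  · intro J hJ K hK h
    have h1 : c ∉ J := fun h => hc ((Finset.mem_powersetCard.1 hJ).1 h)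
    have h2 : c ∉ K := fun h => hc ((Finset.mem_powersetCard.1 hK).1 h)
    rw [← Finset.erase_insert h1, ← Finset.erase_insert h2]
    exact congrArg (fun X => Finset.erase X c) h
  · rw [Finset.disjoint_left]
    intro J hJ hJ2
    rw [Finset.mem_image] at hJ2
    obtain ⟨K, _, rfl⟩ := hJ2
    exact hc ((Finset.mem_powersetCard.1 hJ).1 (Finset.mem_insert_self _ _))

theorem es_congr {ι : Type} [DecidableEq ι] (s : Finset ι) (r : ℕ) (y z : ι → ℕ)
    (h : ∀ i ∈ s, y i = z i) : es s r y = es s r z := by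
  unfold es
  apply Finset.sum_congr rfl
  intro J hJ
  exact Finset.prod_congr rfl (fun j hj => h j ((Finset.mem_powersetCard.1 hJ).1 hj))

theorem cross_count {V : Type} [DecidableEq V] {k : ℕ} (χ : V → Fin k) (C : Finset V) (r : ℕ) :
    ((C.powersetCard r).filter (fun e => ∀ u ∈ e, ∀ v ∈ e, χ u = χ v → u = v)).card =
      es Finset.univ r (fun i => (C.filter (fun u => χ u = i)).card) := by
  classical
  unfold es
  rw [Finset.card_eq_sum_card_fiberwise (f := fun e => e.image χ)
    (t := (Finset.univ : Finset (Fin k)).powersetCard r)]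
  · apply Finset.sum_congr rfl
    intro J hJ
    rw [← Finset.card_pi]
    symm
    have hJc := (Finset.mem_powersetCard.1 hJ).2
    refine Finset.card_bij (fun p _ => J.attach.image (fun j => p j.1 j.2)) ?_ ?_ ?_
    · intro p hp
      rw [Finset.mem_pi] at hp
      have hχ : ∀ j (hj : j ∈ J), χ (p j hj) = j := fun j hj => (Finset.mem_filter.1 (hp j hj)).2
      simp only [Finset.mem_filter, Finset.mem_powersetCard]
      refine ⟨⟨⟨?_, ?_⟩, ?_⟩, ?_⟩
      · intro x hx
        obtain ⟨j, _, rfl⟩ := Finset.mem_image.1 hx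
        exact (Finset.mem_filter.1 (hp j.1 j.2)).1
      · rw [Finset.card_image_of_injective, Finset.card_attach, hJc]
        intro a b hab
        apply Subtype.ext
        rw [← hχ a.1 a.2, ← hχ b.1 b.2]; exact congrArg χ hab
      · intro u hu v hv huv
        obtain ⟨a, _, rfl⟩ := Finset.mem_image.1 hu
        obtain ⟨b, _, rfl⟩ := Finset.mem_image.1 hv
        rw [hχ, hχ] at huv
        have : a = b := Subtype.ext huv
        rw [this]
      · ext j
        simp only [Finset.mem_image, Finset.mem_attach, true_and]
        constructor
        · rintro ⟨x, ⟨a, rfl⟩, rfl⟩; rw [hχ]; exact a.2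
        · intro hj; exact ⟨_, ⟨⟨j, hj⟩, rfl⟩, hχ j hj⟩
    · intro p hp q hq h
      rw [Finset.mem_pi] at hp hq
      funext j hj
      have h1 : p j hj ∈ J.attach.image (fun j => q j.1 j.2) := by
        rw [← h]; exact Finset.mem_image.2 ⟨⟨j, hj⟩, Finset.mem_attach _ _, rfl⟩
      obtain ⟨b, _, hb⟩ := Finset.mem_image.1 h1
      have h2 : χ (p j hj) = j := (Finset.mem_filter.1 (hp j hj)).2
      have h3 : χ (q b.1 b.2) = b.1 := (Finset.mem_filter.1 (hq b.1 b.2)).2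
      have h4 : b = ⟨j, hj⟩ := by
        apply Subtype.ext; rw [← h3, hb, h2]
      rw [← hb, h4]
    · intro e he
      simp only [Finset.mem_filter, Finset.mem_powersetCard] at he
      obtain ⟨⟨⟨h1, h2⟩, h3⟩, h4⟩ := he
      have hex : ∀ j, j ∈ J → ∃ x ∈ e, χ x = j := by
        intro j hj; rw [← h4] at hj; exact Finset.mem_image.1 hj
      choose g hg using hex
      refine ⟨fun j hj => g j hj, ?_, ?_⟩
      · rw [Finset.mem_pi]; intro j hj
        exact Finset.mem_filter.2 ⟨h1 (hg j hj).1, (hg j hj).2⟩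
      · ext x
        simp only [Finset.mem_image, Finset.mem_attach, true_and]
        constructor
        · rintro ⟨a, rfl⟩; exact (hg a.1 a.2).1
        · intro hx
          have : χ x ∈ J := by rw [← h4]; exact Finset.mem_image_of_mem _ hx
          exact ⟨⟨χ x, this⟩, h3 _ (hg _ this).1 _ hx (hg _ this).2⟩
  · intro e he
    simp only [Finset.coe_filter, Finset.mem_powersetCard, Set.mem_ofPred_eq] at he
    rw [Finset.mem_coe, Finset.mem_powersetCard]
    refine ⟨Finset.subset_univ _, ?_⟩
    rw [Finset.card_image_of_injOn, he.1.2]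
    intro u hu v hv huv; exact he.2 u hu v hv huv

/-- class sizes in Turan graph -/
def zf (k n : ℕ) (c : Fin k) : ℕ := Nat.count (fun u => u % k = c) n

theorem turanNum_eq (r n k : ℕ) (hk : 0 < k) : turanNum r n k = es Finset.univ r (zf k n) := by
  have h := cross_count (V := Fin n) (fun u => (⟨u % k, Nat.mod_lt _ hk⟩ : Fin k)) Finset.univ r
  unfold turanNum turanGraph
  simp only [Fin.mk.injEq] at h
  rw [h]
  apply es_congr
  intro i _
  unfold zf
  rw [Nat.count_eq_card_filter_range]
  refine Finset.card_bij (fun u _ => (u:ℕ)) ?_ ?_ ?_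
  · intro u hu; simpa [Fin.ext_iff] using hu
  · intro u _ v _ h; exact Fin.ext h
  · intro x hx
    simp only [Finset.mem_filter, Finset.mem_range] at hx
    exact ⟨⟨x, hx.1⟩, by simp [Fin.ext_iff, hx.2], rfl⟩

theorem zf_eq (k n : ℕ) (hk : 0 < k) (c : Fin k) :
    zf k n c = n / k + if (c:ℕ) < n % k then 1 else 0 := by
  have h := Nat.count_modEq_card n hk c
  unfold zf
  rw [Nat.mod_eq_of_lt c.2] at h
  rw [← h]
  unfold Nat.ModEq
  simp [Nat.mod_eq_of_lt c.2]

theorem zf_sum (k n : ℕ) (hk : 0 < k) : ∑ c, zf k n c = n := by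
  simp_rw [zf_eq k n hk]
  rw [Finset.sum_add_distrib, Finset.sum_const, Finset.card_univ, Fintype.card_fin, smul_eq_mul,
    ← Finset.card_filter]
  have : (Finset.univ.filter (fun c : Fin k => (c:ℕ) < n % k)).card = n % k := by
    have := Fin.card_filter_val_lt (n := k) (m := n % k)
    rw [this]; exact min_eq_right (Nat.mod_lt _ hk).le
  rw [this]; exact Nat.div_add_mod n k

theorem turan_diff (r n k : ℕ) (hk : 0 < k) :
    turanNum (r+1) n k + (k-1).choose r * (n/k)^r ≤ turanNum (r+1) (n+1) k := by
  rw [turanNum_eq _ _ _ hk, turanNum_eq _ _ _ hk]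
  set c : Fin k := ⟨n % k, Nat.mod_lt _ hk⟩ with hc
  have hu : (Finset.univ : Finset (Fin k)) = insert c (Finset.univ.erase c) := by simp
  rw [hu, es_insert _ _ (by simp), es_insert _ _ (by simp)]
  have h1 : ∀ i ∈ Finset.univ.erase c, zf k (n+1) i = zf k n i := by
    intro i hi
    unfold zf
    rw [Nat.count_succ, if_neg]; rfl
    intro h
    exact (Finset.mem_erase.1 hi).1 (Fin.ext h.symm)
  have h2 : zf k (n+1) c = zf k n c + 1 := by
    unfold zf
    rw [Nat.count_succ, if_pos rfl]
  rw [es_congr _ _ _ _ h1, es_congr _ r _ _ h1, h2]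
  have h3 : (k-1).choose r * (n/k)^r ≤ es (Finset.univ.erase c) r (zf k n) := by
    unfold es
    have : (k-1).choose r = ((Finset.univ.erase c).powersetCard r).card := by
      rw [Finset.card_powersetCard]; simp
    rw [this, ← smul_eq_mul, ← Finset.sum_const]
    apply Finset.sum_le_sum
    intro J hJ
    rw [← (Finset.mem_powersetCard.1 hJ).2]
    apply Finset.pow_card_le_prod
    intro j _
    rw [zf_eq k n hk]; omega
  nlinarith

theorem es_smooth {ι : Type} [DecidableEq ι] [Fintype ι] (r : ℕ) (n : ℕ) :
    ∀ (m : ℕ) (y : ι → ℕ), ∑ i, y i ^ 2 = m → ∑ i, y i = n →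
    ∃ z : ι → ℕ, ∑ i, z i = n ∧ (∀ i j, z i ≤ z j + 1) ∧
      es Finset.univ (r+2) y ≤ es Finset.univ (r+2) z := by
  intro m
  induction m using Nat.strong_induction_on with
  | _ m ih =>
  intro y hm hn
  by_cases hb : ∀ i j, y i ≤ y j + 1
  · exact ⟨y, hn, hb, le_rfl⟩
  push Not at hb
  obtain ⟨i, j, hij⟩ := hb
  have hne : i ≠ j := by rintro rfl; omega
  set s : Finset ι := (Finset.univ.erase i).erase j with hs
  have hjs : j ∉ s := by simp [hs]
  have his : i ∉ insert j s := by simp [hs, hne]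
  have hu : (Finset.univ : Finset ι) = insert i (insert j s) := by
    ext x; simp [hs]; tauto
  set y' : ι → ℕ := fun x => if x = i then y i - 1 else if x = j then y j + 1 else y x with hy'
  have e1 : y' i = y i - 1 := by simp [hy']
  have e2 : y' j = y j + 1 := by simp [hy', hne.symm]
  have e3 : ∀ x ∈ s, y' x = y x := by
    intro x hx
    have h1 : x ≠ i := by rintro rfl; exact his (Finset.mem_insert_of_mem hx)
    have h2 : x ≠ j := by rintro rfl; exact hjs hx
    simp [hy', h1, h2]
  obtain ⟨a, ha⟩ : ∃ a, y i = y j + 2 + a := ⟨y i - y j - 2, by omega⟩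
  have e1' : y' i = y j + 1 + a := by omega
  have hsum : ∑ x, y' x = n := by
    rw [← hn, hu, Finset.sum_insert his, Finset.sum_insert hjs, Finset.sum_insert his,
      Finset.sum_insert hjs, Finset.sum_congr rfl e3]
    rw [e1', e2, ha]; ring
  have hsq : ∑ x, y' x ^ 2 < m := by
    have e4 : ∀ x ∈ s, y' x ^ 2 = y x ^ 2 := fun x hx => by rw [e3 x hx]
    rw [← hm, hu, Finset.sum_insert his, Finset.sum_insert hjs, Finset.sum_insert his,
      Finset.sum_insert hjs, Finset.sum_congr rfl e4, e1', e2, ha]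
    nlinarith
  obtain ⟨z, h1, h2, h3⟩ := ih _ hsq y' rfl hsum
  refine ⟨z, h1, h2, le_trans ?_ h3⟩
  rw [hu, es_insert _ _ his, es_insert _ _ hjs, es_insert _ _ hjs, es_insert _ _ his,
    es_insert _ _ hjs, es_insert _ _ hjs, es_congr _ _ _ _ e3, es_congr _ _ _ _ e3,
    es_congr _ _ _ _ e3, e1', e2, ha]
  nlinarith [Nat.zero_le (es s r y), Nat.zero_le (a * es s r y)]

theorem bal_vals {k : ℕ} (hk : 0 < k) (n : ℕ) (y : Fin k → ℕ) (hy : ∑ i, y i = n)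
    (hb : ∀ i j, y i ≤ y j + 1) (i : Fin k) : y i = n / k ∨ y i = n / k + 1 := by
  have hq1 : k * (n/k) ≤ n := Nat.mul_div_le n k
  have hq2 : n < k * (n/k + 1) := Nat.lt_mul_div_succ n hk
  by_contra hcon
  push Not at hcon
  rcases Nat.lt_or_ge (y i) (n/k) with h | h
  · have : ∑ j, y j < ∑ _j : Fin k, n / k := by
      apply Finset.sum_lt_sum
      · intro j _; have := hb j i; omega
      · exact ⟨i, Finset.mem_univ _, h⟩
    rw [Finset.sum_const, Finset.card_univ, Fintype.card_fin, smul_eq_mul] at this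
    omega
  · have : ∑ _j : Fin k, (n / k + 1) ≤ ∑ j, y j := by
      apply Finset.sum_le_sum
      intro j _; have := hb i j; omega
    rw [Finset.sum_const, Finset.card_univ, Fintype.card_fin, smul_eq_mul] at this
    omega

theorem bal_count {k : ℕ} (hk : 0 < k) (n : ℕ) (y : Fin k → ℕ) (hy : ∑ i, y i = n)
    (hb : ∀ i j, y i ≤ y j + 1) :
    (Finset.univ.filter (fun i => y i = n/k + 1)).card = n % k := by
  have h1 : ∀ i, y i = n / k + if y i = n/k + 1 then 1 else 0 := by
    intro i
    rcases bal_vals hk n y hy hb i with h | h <;> simp [h]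
  have h2 : ∑ i, y i = ∑ i, (n / k + if y i = n/k + 1 then 1 else 0) :=
    Finset.sum_congr rfl (fun i _ => h1 i)
  rw [Finset.sum_add_distrib, ← Finset.card_filter, Finset.sum_const, Finset.card_univ,
    Fintype.card_fin, smul_eq_mul, hy] at h2
  have := Nat.div_add_mod n k
  omega

theorem bal_es {k : ℕ} (hk : 0 < k) (n r : ℕ) (y z : Fin k → ℕ) (hy : ∑ i, y i = n)
    (hyb : ∀ i j, y i ≤ y j + 1) (hz : ∑ i, z i = n) (hzb : ∀ i j, z i ≤ z j + 1) :
    es Finset.univ r y = es Finset.univ r z := by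
  unfold es
  rw [← Finset.esymm_map_val, ← Finset.esymm_map_val]
  congr 1
  have key : ∀ w : Fin k → ℕ, ∑ i, w i = n → (∀ i j, w i ≤ w j + 1) → ∀ a,
      Multiset.count a (Finset.univ.val.map w) =
        if a = n/k + 1 then n % k else if a = n/k then k - n % k else 0 := by
    intro w hw hwb a
    have hv := bal_vals hk n w hw hwb
    have hc := bal_count hk n w hw hwb
    rw [Multiset.count_map]
    have : Multiset.card (Multiset.filter (fun b => a = w b) Finset.univ.val) =
      (Finset.univ.filter (fun b => a = w b)).card := rfl
    rw [this]
    split_ifs with h1 h2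
    · rw [← hc]; congr 1; ext; simp [h1, eq_comm]
    · have h3 : (Finset.univ.filter (fun b => a = w b)) =
          Finset.univ \ (Finset.univ.filter (fun i => w i = n/k + 1)) := by
        ext x; simp; rcases hv x with h | h <;> omega
      rw [h3, Finset.card_sdiff_of_subset (Finset.subset_univ _), hc]; simp
    · rw [Finset.card_eq_zero, Finset.filter_eq_empty_iff]
      intro x _; rcases hv x with h | h <;> omega
  ext a
  rw [key y hy hyb, key z hz hzb]

theorem kpartite_le {V : Type} [Fintype V] [DecidableEq V] (r k : ℕ) (hr : 2 ≤ r) (hk : 0 < k)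
    (G : Finset (Finset V)) (hG : IsRGraph r G) (χ : V → Fin k)
    (h : ∀ e ∈ G, ∀ u ∈ e, ∀ v ∈ e, χ u = χ v → u = v) :
    G.card ≤ turanNum r (Fintype.card V) k := by
  obtain ⟨r, rfl⟩ : ∃ r', r = r' + 2 := ⟨r - 2, by omega⟩
  have h1 : G ⊆ ((Finset.univ.powersetCard (r+2)).filter
      (fun e => ∀ u ∈ e, ∀ v ∈ e, χ u = χ v → u = v)) := by
    intro e he
    rw [Finset.mem_filter, Finset.mem_powersetCard]
    exact ⟨⟨Finset.subset_univ _, hG e he⟩, h e he⟩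
  refine (Finset.card_le_card h1).trans ?_
  have hcc := cross_count χ Finset.univ (r+2)
  refine le_trans (b := es Finset.univ (r+2) (fun i => (Finset.univ.filter (fun u => χ u = i)).card)) (le_of_eq (by convert hcc)) ?_
  have hsum : ∑ i : Fin k, (Finset.univ.filter (fun u => χ u = i)).card = Fintype.card V := by
    rw [← Finset.card_univ]
    exact (Finset.card_eq_sum_card_fiberwise (fun x _ => Finset.mem_univ _)).symm
  obtain ⟨z, hz1, hz2, hz3⟩ := es_smooth r (Fintype.card V) _ _ rfl hsum
  refine hz3.trans ?_
  rw [turanNum_eq _ _ _ hk]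
  apply le_of_eq
  apply bal_es hk _ _ _ _ hz1 hz2 (zf_sum k _ hk)
  intro i j
  rw [zf_eq _ _ hk, zf_eq _ _ hk]
  split_ifs <;> omega

/-- thick pairs graph -/
def thickGraph {V : Type} (G : Finset (Finset V)) (M : ℕ) : SimpleGraph V where
  Adj u v := u ≠ v ∧ ∀ W : Finset V, W.card ≤ M → u ∉ W → v ∉ W → ∃ e ∈ G, u ∈ e ∧ v ∈ e ∧ Disjoint e W
  symm := ⟨by
    rintro u v ⟨h, h2⟩
    refine ⟨h.symm, fun W hW hv hu => ?_⟩
    obtain ⟨e, he, h3, h4, h5⟩ := h2 W hW hu hv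
    exact ⟨e, he, h4, h3, h5⟩⟩
  loopless := ⟨fun v h => h.1 rfl⟩

def CritCol {α : Type*} {k : ℕ} (F : SimpleGraph α) (c : α → Fin k) (a b : α) : Prop :=
  F.Adj a b ∧ c a = c b ∧ ∀ x y, F.Adj x y → s(x, y) ≠ s(a, b) → c x ≠ c y

theorem emb_g {α : Type*} [Fintype α] [DecidableEq α] {V : Type} [DecidableEq V]
    (r M : ℕ) (F : SimpleGraph α) [DecidableRel F.Adj] (G : Finset (Finset V))
    (hG : IsRGraph r G) (hM : Fintype.card α + (F.edgeFinset.card + 1) * r ≤ M)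
    (f : α → V) (hf : Function.Injective f) (a b : α)
    (e0 : Finset V) (he0 : e0 ∈ G) (ha : f a ∈ e0) (hb : f b ∈ e0)
    (hx : ∀ x, x ≠ a → x ≠ b → f x ∉ e0)
    (hS : ∀ x y, F.Adj x y → s(x, y) ≠ s(a, b) → (thickGraph G M).Adj (f x) (f y))
    (D : Finset (Sym2 α)) : D ⊆ F.edgeFinset →
    ∃ g : Sym2 α → Finset V,
      (∀ e ∈ insert s(a, b) D, g e ∈ G ∧ ∀ x, f x ∈ g e ↔ x ∈ e) ∧
      (∀ e ∈ insert s(a, b) D, ∀ e' ∈ insert s(a, b) D, e ≠ e' → ∀ y ∈ g e, y ∈ g e' → ∃ x, f x = y) := by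
  induction D using Finset.induction_on with
  | empty =>
    intro _
    refine ⟨fun _ => e0, ?_, ?_⟩
    · intro e he
      simp only [insert_empty_eq, Finset.mem_singleton] at he
      subst he
      refine ⟨he0, fun x => ?_⟩
      rw [Sym2.mem_iff]
      constructor
      · intro h; by_contra hc; push Not at hc; exact hx x hc.1 hc.2 h
      · rintro (rfl | rfl) <;> assumption
    · intro e he e' he' hne
      simp only [insert_empty_eq, Finset.mem_singleton] at he he'
      exact absurd (he.trans he'.symm) hne
  | insert e D heD ih =>
    intro hsub
    obtain ⟨g, hg1, hg2⟩ := ih (fun x hx => hsub (Finset.mem_insert_of_mem hx))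
    rw [Finset.insert_comm]
    set D' := insert s(a, b) D with hD'
    by_cases heD' : e ∈ D'
    · rw [Finset.insert_eq_of_mem heD']; exact ⟨g, hg1, hg2⟩
    have heF : e ∈ F.edgeFinset := hsub (Finset.mem_insert_self _ _)
    have hne : e ≠ s(a, b) := by rintro rfl; exact heD' (Finset.mem_insert_self _ _)
    induction e using Sym2.ind with
    | _ x y =>
    rw [SimpleGraph.mem_edgeFinset, SimpleGraph.mem_edgeSet] at heF
    have hthick := hS x y heF hne
    set W := ((Finset.univ.image f ∪ D'.biUnion g).erase (f x)).erase (f y) with hW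
    have hWc : W.card ≤ M := by
      refine le_trans ?_ hM
      refine (Finset.card_erase_le).trans ((Finset.card_erase_le).trans ?_)
      refine (Finset.card_union_le _ _).trans ?_
      apply Nat.add_le_add
      · exact Finset.card_image_le
      · refine (Finset.card_biUnion_le).trans ?_
        rw [Finset.sum_congr rfl (fun e he => hG _ (hg1 e he).1), Finset.sum_const, smul_eq_mul]
        apply Nat.mul_le_mul_right
        refine (Finset.card_insert_le _ _).trans ?_
        gcongr
        intro z hz; exact hsub (Finset.mem_insert_of_mem hz)
    obtain ⟨e1, he1, hxe, hye, hdis⟩ := hthick.2 W hWc (by simp [hW]) (by simp [hW])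
    rw [Finset.disjoint_left] at hdis
    have hov : ∀ y' ∈ e1, ∀ e' ∈ D', y' ∈ g e' → ∃ x, f x = y' := by
      intro y' hy' e' he' hye'
      by_contra hcon
      push Not at hcon
      apply hdis hy'
      simp only [hW, Finset.mem_erase, Finset.mem_union, Finset.mem_biUnion]
      exact ⟨(hcon y).symm, (hcon x).symm, Or.inr ⟨e', he', hye'⟩⟩
    refine ⟨Function.update g s(x, y) e1, ?_, ?_⟩
    · intro e' he'
      by_cases h : e' = s(x, y)
      · subst h
        rw [Function.update_self]
        refine ⟨he1, fun z => ?_⟩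
        rw [Sym2.mem_iff]
        constructor
        · intro hz
          by_contra hc
          push Not at hc
          apply hdis hz
          simp only [hW, Finset.mem_erase, Finset.mem_union, Finset.mem_image, Finset.mem_univ, true_and]
          exact ⟨fun h => hc.2 (hf h), fun h => hc.1 (hf h), Or.inl ⟨z, rfl⟩⟩
        · rintro (rfl | rfl) <;> assumption
      · rw [Function.update_of_ne h]
        exact hg1 e' (Finset.mem_of_mem_insert_of_ne he' h)
    · intro e' he' e'' he'' hne' y' hy1 hy2
      by_cases h : e' = s(x, y)
      · have h2 : e'' ≠ s(x, y) := fun h3 => hne' (h.trans h3.symm)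
        rw [h, Function.update_self] at hy1
        rw [Function.update_of_ne h2] at hy2
        exact hov y' hy1 e'' (Finset.mem_of_mem_insert_of_ne he'' h2) hy2
      · by_cases h2 : e'' = s(x, y)
        · rw [h2, Function.update_self] at hy2
          rw [Function.update_of_ne h] at hy1
          exact hov y' hy2 e' (Finset.mem_of_mem_insert_of_ne he' h) hy1
        · rw [Function.update_of_ne h] at hy1
          rw [Function.update_of_ne h2] at hy2
          exact hg2 e' (Finset.mem_of_mem_insert_of_ne he' h) e''
            (Finset.mem_of_mem_insert_of_ne he'' h2) hne' y' hy1 hy2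

theorem emb {α : Type*} [Fintype α] [DecidableEq α] {V : Type} [DecidableEq V]
    (r M : ℕ) (F : SimpleGraph α) [DecidableRel F.Adj] (G : Finset (Finset V))
    (hG : IsRGraph r G) (hM : Fintype.card α + (F.edgeFinset.card + 1) * r ≤ M)
    (f : α → V) (hf : Function.Injective f) (a b : α)
    (e0 : Finset V) (he0 : e0 ∈ G) (ha : f a ∈ e0) (hb : f b ∈ e0)
    (hx : ∀ x, x ≠ a → x ≠ b → f x ∉ e0)
    (hS : ∀ x y, F.Adj x y → s(x, y) ≠ s(a, b) → (thickGraph G M).Adj (f x) (f y)) :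
    ContainsCopy (expansion r F) G := by
  classical
  obtain ⟨g, hg1, hg2⟩ := emb_g r M F G hG hM f hf a b e0 he0 ha hb hx hS F.edgeFinset subset_rfl
  have hg1' : ∀ e : F.edgeFinset, g e.1 ∈ G ∧ ∀ x, f x ∈ g e.1 ↔ x ∈ e.1 :=
    fun e => hg1 e.1 (Finset.mem_insert_of_mem e.2)
  have hg2' : ∀ e e' : F.edgeFinset, e ≠ e' → ∀ y ∈ g e.1, y ∈ g e'.1 → ∃ x, f x = y :=
    fun e e' hne => hg2 e.1 (Finset.mem_insert_of_mem e.2) e'.1 (Finset.mem_insert_of_mem e'.2)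
      (fun h => hne (Subtype.ext h))
  have himg : ∀ e : F.edgeFinset, (sym2ToFinset e.1).image f ⊆ g e.1 := by
    intro e y hy
    obtain ⟨x, hx, rfl⟩ := Finset.mem_image.1 hy
    exact ((hg1' e).2 x).2 (by simpa [sym2ToFinset] using hx)
  have hcard2 : ∀ e : F.edgeFinset, ((sym2ToFinset e.1).image f).card = 2 := by
    rintro ⟨e, he⟩
    rw [Finset.card_image_of_injective _ hf]
    induction e using Sym2.ind with
    | _ x y =>
    have hne : x ≠ y := by
      rw [SimpleGraph.mem_edgeFinset, SimpleGraph.mem_edgeSet] at he; exact he.ne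
    have : sym2ToFinset s(x, y) = {x, y} := by
      ext z; simp [sym2ToFinset]
    rw [this, Finset.card_pair hne]
  have hrest : ∀ e : F.edgeFinset, (g e.1 \ (sym2ToFinset e.1).image f).card = r - 2 := by
    intro e
    rw [Finset.card_sdiff_of_subset (himg e), hcard2, hG _ (hg1' e).1]
  have φ : ∀ e : F.edgeFinset, Fin (r-2) ≃ ↥(g e.1 \ (sym2ToFinset e.1).image f) :=
    fun e => (Finset.equivFinOfCardEq (hrest e)).symm
  have hφ1 : ∀ e i, (φ e i : V) ∈ g e.1 := fun e i => (Finset.mem_sdiff.1 (φ e i).2).1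
  have hφ2 : ∀ e i x, f x ≠ (φ e i : V) := by
    intro e i x h
    have h1 := hφ1 e i
    rw [← h, (hg1' e).2] at h1
    apply (Finset.mem_sdiff.1 (φ e i).2).2
    rw [← h]
    exact Finset.mem_image_of_mem _ (by simpa [sym2ToFinset] using h1)
  refine ⟨Sum.elim f (fun p => (φ p.1 p.2 : V)), ?_, ?_⟩
  · rintro (x | ⟨e, i⟩) (y | ⟨e', i'⟩) h
    · simp only [Sum.elim_inl] at h; rw [hf h]
    · exact absurd h (hφ2 e' i' x)
    · exact absurd h.symm (hφ2 e i y)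
    · simp only [Sum.elim_inr] at h
      by_cases hee : e = e'
      · subst hee
        rw [(φ e).injective (Subtype.ext h)]
      · exfalso
        obtain ⟨x, hx⟩ := hg2' e e' hee _ (hφ1 e i) (h ▸ hφ1 e' i')
        exact hφ2 e i x hx
  · intro E hE
    unfold expansion at hE
    obtain ⟨e, _, rfl⟩ := Finset.mem_image.1 hE
    have : Finset.image (Sum.elim f (fun p => (φ p.1 p.2 : V)))
        ((sym2ToFinset e.1).image Sum.inl ∪
      (Finset.univ : Finset (Fin (r - 2))).image (fun i => Sum.inr (e, i))) = g e.1 := by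
      rw [Finset.image_union, Finset.image_image, Finset.image_image]
      ext y
      simp only [Finset.mem_union, Finset.mem_image, Function.comp, Sum.elim_inl, Sum.elim_inr,
        Finset.mem_univ, true_and]
      constructor
      · rintro (⟨x, hx, rfl⟩ | ⟨i, rfl⟩)
        · exact himg e (Finset.mem_image_of_mem _ hx)
        · exact hφ1 e i
      · intro hy
        by_cases h : y ∈ (sym2ToFinset e.1).image f
        · left; exact Finset.mem_image.1 h
        · right
          exact ⟨(φ e).symm ⟨y, Finset.mem_sdiff.2 ⟨hy, h⟩⟩, by simp⟩
    rw [this]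
    exact (hg1' e).1

theorem greedy {α : Type*} [Fintype α] [DecidableEq α] {V : Type} [DecidableEq V] [Fintype V] {ι : Type}
    (S : SimpleGraph V) (c : α → ι) (X : ι → Finset V) (Z : Finset V) (q : ℕ)
    (hq : ∀ i j, i ≠ j → ∀ v ∈ X i, (X j \ nbr S v).card ≤ q)
    (hX : ∀ i, Z.card + Fintype.card α + Fintype.card α * q < (X i).card) :
    ∃ f : α → V, Function.Injective f ∧ (∀ x, f x ∈ X (c x)) ∧ (∀ x, f x ∉ Z) ∧
      ∀ x y, c x ≠ c y → S.Adj (f x) (f y) := by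
  classical
  have main : ∀ B : Finset α, ∃ f : α → V, Set.InjOn f B ∧ (∀ x ∈ B, f x ∈ X (c x)) ∧
      (∀ x ∈ B, f x ∉ Z) ∧ ∀ x ∈ B, ∀ y ∈ B, c x ≠ c y → S.Adj (f x) (f y) := by
    intro B
    induction B using Finset.induction_on with
    | empty =>
      have : ∀ x : α, ∃ v, v ∈ X (c x) := fun x => Finset.card_pos.1 (by have := hX (c x); omega)
      choose f hf using this
      exact ⟨f, by simp⟩
    | insert z B hz ih =>
      obtain ⟨f, h1, h2, h3, h4⟩ := ih
      set bad := Z ∪ (B.image f ∪ (B.filter (fun x => c x ≠ c z)).biUnion (fun x => X (c z) \ nbr S (f x))) with hbad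
      have hBs : B.card ≤ Fintype.card α := Finset.card_le_univ _
      have hbc : bad.card < (X (c z)).card := by
        refine lt_of_le_of_lt ?_ (hX (c z))
        refine (Finset.card_union_le _ _).trans ?_
        rw [add_assoc]
        apply Nat.add_le_add_left
        refine (Finset.card_union_le _ _).trans ?_
        apply Nat.add_le_add
        · exact Finset.card_image_le.trans hBs
        · refine (Finset.card_biUnion_le_card_mul _ _ q ?_).trans ?_
          · intro x hx
            rw [Finset.mem_filter] at hx
            exact hq _ _ hx.2 _ (h2 x hx.1)
          · apply Nat.mul_le_mul_right
            exact (Finset.card_filter_le _ _).trans hBs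
      obtain ⟨v, hvX, hvb⟩ := Finset.exists_mem_notMem_of_card_lt_card hbc
      simp only [hbad, Finset.mem_union, not_or, Finset.mem_image, Finset.mem_biUnion,
        Finset.mem_filter, Finset.mem_sdiff, not_exists, not_and, not_not, mem_nbr] at hvb
      obtain ⟨hv1, hv2, hv3⟩ := hvb
      have hne : ∀ x ∈ B, x ≠ z := by rintro x hx rfl; exact hz hx
      have hup : ∀ x ∈ B, Function.update f z v x = f x := fun x hx => Function.update_of_ne (hne x hx) _ _
      refine ⟨Function.update f z v, ?_, ?_, ?_, ?_⟩
      · intro x hx y hy hxy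
        rw [Finset.mem_coe, Finset.mem_insert] at hx hy
        rcases hx with rfl | hx <;> rcases hy with rfl | hy
        · rfl
        · rw [Function.update_self, hup y hy] at hxy; exact absurd hxy.symm (hv2 y hy)
        · rw [Function.update_self, hup x hx] at hxy; exact absurd hxy (hv2 x hx)
        · rw [hup x hx, hup y hy] at hxy; exact h1 hx hy hxy
      · intro x hx
        rw [Finset.mem_insert] at hx
        rcases hx with rfl | hx
        · rwa [Function.update_self]
        · rw [hup x hx]; exact h2 x hx
      · intro x hx
        rw [Finset.mem_insert] at hx
        rcases hx with rfl | hx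
        · rwa [Function.update_self]
        · rw [hup x hx]; exact h3 x hx
      · intro x hx y hy hxy
        rw [Finset.mem_insert] at hx hy
        rcases hx with rfl | hx <;> rcases hy with rfl | hy
        · exact absurd rfl hxy
        · rw [Function.update_self, hup y hy]; exact (hv3 y ⟨hy, hxy.symm⟩ hvX).symm
        · rw [Function.update_self, hup x hx]; exact hv3 x ⟨hx, hxy⟩ hvX
        · rw [hup x hx, hup y hy]; exact h4 x hx y hy hxy
  obtain ⟨f, h1, h2, h3, h4⟩ := main Finset.univ
  exact ⟨f, fun x y h => h1 (by simp) (by simp) h, fun x => h2 x (by simp), fun x => h3 x (by simp),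
    fun x y => h4 x (by simp) y (by simp)⟩

theorem key2 {α : Type*} [Fintype α] [DecidableEq α] {V : Type} [DecidableEq V] [Fintype V] {k : ℕ}
    (r M : ℕ) (F : SimpleGraph α) [DecidableRel F.Adj] (G : Finset (Finset V))
    (hG : IsRGraph r G) (hM : Fintype.card α + (F.edgeFinset.card + 1) * r ≤ M)
    (c : α → Fin k) (a b : α) (hc : CritCol F c a b)
    (X : Fin k → Finset V) (q : ℕ)
    (hq : ∀ i j, i ≠ j → ∀ v ∈ X i, (X j \ nbr (thickGraph G M) v).card ≤ q)
    (hX : ∀ i, r + Fintype.card α + Fintype.card α * q < (X i).card)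
    (u v : V) (huv : u ≠ v) (e0 : Finset V) (he0 : e0 ∈ G) (hu : u ∈ e0) (hv : v ∈ e0) (i : Fin k)
    (hadj : ∀ j, j ≠ i → ∀ x ∈ X j, (thickGraph G M).Adj u x ∧ (thickGraph G M).Adj v x) :
    ContainsCopy (expansion r F) G := by
  classical
  obtain ⟨hab, hcab, hprop⟩ := hc
  set c' : α → Fin k := fun x => Equiv.swap (c a) i (c x) with hc'
  obtain ⟨f, hf1, hf2, hf3, hf4⟩ := greedy (thickGraph G M) c' X e0 q hq
    (fun i => by rw [hG e0 he0]; exact hX i)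
  have hca : c' a = i := by simp [hc']
  have hcb : c' b = i := by simp [hc', ← hcab]
  have hne : a ≠ b := hab.ne
  have hprop' : ∀ x y, F.Adj x y → s(x, y) ≠ s(a, b) → c' x ≠ c' y := by
    intro x y h1 h2 h3
    exact hprop x y h1 h2 ((Equiv.swap (c a) i).injective h3)
  set f' : α → V := fun x => if x = a then u else if x = b then v else f x with hf'
  have fa : f' a = u := by simp [hf']
  have fb : f' b = v := by simp [hf', hne.symm]
  have fx : ∀ x, x ≠ a → x ≠ b → f' x = f x := by intro x h1 h2; simp [hf', h1, h2]
  have fu : ∀ x, f x ≠ u := fun x h => hf3 x (h ▸ hu)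
  have fv : ∀ x, f x ≠ v := fun x h => hf3 x (h ▸ hv)
  have hsym : ∀ x y, F.Adj x y → s(x, y) ≠ s(a, b) → (x = a ∨ x = b) → (thickGraph G M).Adj (f' x) (f' y) := by
    intro x y h1 h2 h3
    have h4 := hprop' x y h1 h2
    have hx : c' x = i := by rcases h3 with rfl | rfl <;> assumption
    rw [hx] at h4
    have ya : y ≠ a := by rintro rfl; exact h4 hca.symm
    have yb : y ≠ b := by rintro rfl; exact h4 hcb.symm
    have h5 := hadj (c' y) h4.symm (f y) (hf2 y)
    rw [fx y ya yb]
    rcases h3 with rfl | rfl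
    · rw [fa]; exact h5.1
    · rw [fb]; exact h5.2
  refine emb r M F G hG hM f' ?_ a b e0 he0 (fa ▸ hu) (fb ▸ hv) ?_ ?_
  · intro x y h
    by_cases xa : x = a
    · subst xa
      by_cases ya : y = x
      · exact ya.symm
      · by_cases yb : y = b
        · subst yb; rw [fa, fb] at h; exact absurd h huv
        · rw [fa, fx y ya yb] at h; exact absurd h.symm (fu y)
    · by_cases xb : x = b
      · subst xb
        by_cases ya : y = a
        · subst ya; rw [fa, fb] at h; exact absurd h.symm huv
        · by_cases yb : y = x
          · exact yb.symm
          · rw [fb, fx y ya yb] at h; exact absurd h.symm (fv y)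
      · rw [fx x xa xb] at h
        by_cases ya : y = a
        · subst ya; rw [fa] at h; exact absurd h (fu x)
        · by_cases yb : y = b
          · subst yb; rw [fb] at h; exact absurd h (fv x)
          · rw [fx y ya yb] at h; exact hf1 h
  · intro x h1 h2; rw [fx x h1 h2]; exact hf3 x
  · intro x y h1 h2
    by_cases hx : x = a ∨ x = b
    · exact hsym x y h1 h2 hx
    · by_cases hy : y = a ∨ y = b
      · exact (hsym y x h1.symm (by rwa [Sym2.eq_swap]) hy).symm
      · push Not at hx hy
        rw [fx x hx.1 hx.2, fx y hy.1 hy.2]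
        exact hf4 x y (hprop' x y h1 h2)

theorem key1 {α : Type*} [Fintype α] [DecidableEq α] {V : Type} [DecidableEq V] [Fintype V] {k : ℕ}
    (r M : ℕ) (hr : 2 ≤ r) (F : SimpleGraph α) [DecidableRel F.Adj] (G : Finset (Finset V))
    (hG : IsRGraph r G) (hM : Fintype.card α + (F.edgeFinset.card + 1) * r ≤ M)
    (c : α → Fin k) (a b : α) (hc : CritCol F c a b)
    (X : Fin k → Finset V) (q : ℕ)
    (hq : ∀ i j, i ≠ j → ∀ v ∈ X i, (X j \ nbr (thickGraph G M) v).card ≤ q)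
    (hX : ∀ i, r + Fintype.card α + Fintype.card α * q < (X i).card)
    (v : V) (hadj : ∀ j, ∀ x ∈ X j, (thickGraph G M).Adj v x) :
    ContainsCopy (expansion r F) G := by
  classical
  obtain ⟨hab, hcab, hprop⟩ := hc
  obtain ⟨f, hf1, hf2, hf3, hf4⟩ := greedy (thickGraph G M) c X {v} q hq
    (fun i => by rw [Finset.card_singleton]; have := hX i; omega)
  have hne : a ≠ b := hab.ne
  set f' : α → V := Function.update f a v with hf'
  have fa : f' a = v := by simp [hf']
  have fx : ∀ x, x ≠ a → f' x = f x := by intro x h1; simp [hf', h1]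
  have fv : ∀ x, f x ≠ v := fun x h => hf3 x (by simp [h])
  have hinj : Function.Injective f' := by
    intro x y h
    by_cases xa : x = a
    · by_cases ya : y = a
      · rw [xa, ya]
      · rw [xa, fa, fx y ya] at h; exact absurd h.symm (fv y)
    · by_cases ya : y = a
      · rw [ya, fa, fx x xa] at h; exact absurd h (fv x)
      · rw [fx x xa, fx y ya] at h; exact hf1 h
  have hva : ∀ y, y ≠ a → (thickGraph G M).Adj (f' a) (f' y) := by
    intro y hy; rw [fa, fx y hy]; exact hadj _ _ (hf2 y)
  obtain ⟨e0, he0, h1, h2, h3⟩ := (hva b hne.symm).2 (((Finset.univ.erase a).erase b).image f') (by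
    refine Finset.card_image_le.trans (Finset.card_erase_le.trans (Finset.card_erase_le.trans ?_))
    rw [Finset.card_univ]; omega) (by
      intro h; obtain ⟨x, hx, hx2⟩ := Finset.mem_image.1 h
      have := hinj hx2; subst this; simp at hx) (by
      intro h; obtain ⟨x, hx, hx2⟩ := Finset.mem_image.1 h
      have := hinj hx2; subst this; simp at hx)
  rw [Finset.disjoint_right] at h3
  refine emb r M F G hG hM f' hinj a b e0 he0 h1 h2 ?_ ?_
  · intro x xa xb
    exact h3 (Finset.mem_image_of_mem _ (by simp [xa, xb]))
  · intro x y h4 h5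
    by_cases xa : x = a
    · subst xa; exact hva y h4.ne.symm
    · by_cases ya : y = a
      · subst ya; exact (hva x xa).symm
      · rw [fx x xa, fx y ya]; exact hf4 x y (hprop x y h4 h5)

theorem card_sup {V : Type} [Fintype V] [DecidableEq V] (r : ℕ) (G : Finset (Finset V))
    (hG : IsRGraph r G) (B : Finset V) :
    (G.filter (fun e => B ⊆ e)).card ≤ Fintype.card V ^ (r - B.card) := by
  calc (G.filter (fun e => B ⊆ e)).card
      ≤ ((Finset.univ : Finset V).powersetCard (r - B.card)).card := by
        refine Finset.card_le_card_of_injOn (fun e => e \ B) ?_ ?_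
        · intro e he
          rw [Finset.mem_coe, Finset.mem_filter] at he
          rw [Finset.mem_coe, Finset.mem_powersetCard]
          refine ⟨Finset.subset_univ _, ?_⟩
          rw [Finset.card_sdiff_of_subset he.2, hG e he.1]
        · intro e he e' he' h
          rw [Finset.mem_coe, Finset.mem_filter] at he he'
          simp only at h
          rw [← Finset.sdiff_union_of_subset he.2, h, Finset.sdiff_union_of_subset he'.2]
    _ ≤ _ := by
        rw [Finset.card_powersetCard, Finset.card_univ]
        exact Nat.choose_le_pow _ _

theorem thin_pair {V : Type} [Fintype V] [DecidableEq V] (r M : ℕ) (hr : 2 ≤ r)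
    (G : Finset (Finset V))
    (hG : IsRGraph r G) (u v : V) (huv : u ≠ v) (h : ¬ (thickGraph G M).Adj u v) :
    (G.filter (fun e => u ∈ e ∧ v ∈ e)).card * Fintype.card V
      ≤ M * Fintype.card V ^ (r - 2) := by
  have h' : ¬ (u ≠ v ∧ ∀ W : Finset V, W.card ≤ M → u ∉ W → v ∉ W →
    ∃ e ∈ G, u ∈ e ∧ v ∈ e ∧ Disjoint e W) := h
  push Not at h'
  obtain ⟨W, hW, hu, hv, hWe⟩ := h' huv
  have sub : G.filter (fun e => u ∈ e ∧ v ∈ e) ⊆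
      W.biUnion (fun w => G.filter (fun e => ({u, v, w} : Finset V) ⊆ e)) := by
    intro e he
    rw [Finset.mem_filter] at he
    obtain ⟨w, hw1, hw2⟩ := Finset.not_disjoint_iff.1 (hWe e he.1 he.2.1 he.2.2)
    rw [Finset.mem_biUnion]
    refine ⟨w, hw2, ?_⟩
    rw [Finset.mem_filter]
    refine ⟨he.1, ?_⟩
    intro x hx
    simp only [Finset.mem_insert, Finset.mem_singleton] at hx
    rcases hx with rfl | rfl | rfl
    · exact he.2.1
    · exact he.2.2
    · exact hw1
  have h3 : ∀ w ∈ W, ({u, v, w} : Finset V).card = 3 := by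
    intro w hw
    rw [Finset.card_eq_three]
    exact ⟨u, v, w, huv, fun h => hu (h ▸ hw), fun h => hv (h ▸ hw), rfl⟩
  rcases Nat.lt_or_ge r 3 with hr3 | hr3
  · have : G.filter (fun e => u ∈ e ∧ v ∈ e) = ∅ := by
      rw [Finset.eq_empty_iff_forall_notMem]
      intro e he
      have := sub he
      rw [Finset.mem_biUnion] at this
      obtain ⟨w, hw, he2⟩ := this
      rw [Finset.mem_filter] at he2
      have := Finset.card_le_card he2.2
      rw [h3 w hw, hG e he2.1] at this
      omega
    rw [this]; simp
  · have h4 : (G.filter (fun e => u ∈ e ∧ v ∈ e)).card ≤ M * Fintype.card V ^ (r - 3) := by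
      calc _ ≤ _ := Finset.card_le_card sub
        _ ≤ W.card * Fintype.card V ^ (r - 3) := by
          refine Finset.card_biUnion_le_card_mul _ _ _ ?_
          intro w hw
          have := card_sup r G hG {u, v, w}
          rwa [h3 w hw] at this
        _ ≤ _ := Nat.mul_le_mul_right _ hW
    calc _ ≤ M * Fintype.card V ^ (r - 3) * Fintype.card V := Nat.mul_le_mul_right _ h4
      _ = M * Fintype.card V ^ (r - 3 + 1) := by rw [pow_succ, mul_assoc]
      _ = _ := by congr 2; omega

open Classical in
theorem thin_at {V : Type} [Fintype V] [DecidableEq V] (r M : ℕ) (hr : 2 ≤ r)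
    (G : Finset (Finset V)) (hG : IsRGraph r G) (v : V) :
    (G.filter (fun e => v ∈ e ∧ ∃ x ∈ e, x ≠ v ∧ ¬ (thickGraph G M).Adj v x)).card
      ≤ M * Fintype.card V ^ (r - 2) := by
  have hn : 0 < Fintype.card V := Fintype.card_pos_iff.2 ⟨v⟩
  refine Nat.le_of_mul_le_mul_right ?_ hn
  have sub : G.filter (fun e => v ∈ e ∧ ∃ x ∈ e, x ≠ v ∧ ¬ (thickGraph G M).Adj v x) ⊆
      (Finset.univ.filter (fun x => x ≠ v ∧ ¬ (thickGraph G M).Adj v x)).biUnion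
        (fun x => G.filter (fun e => v ∈ e ∧ x ∈ e)) := by
    intro e he
    rw [Finset.mem_filter] at he
    obtain ⟨h1, h2, x, h3, h4⟩ := he
    rw [Finset.mem_biUnion]
    refine ⟨x, by simpa using h4, ?_⟩
    rw [Finset.mem_filter]; exact ⟨h1, h2, h3⟩
  calc _ ≤ (∑ x ∈ Finset.univ.filter (fun x => x ≠ v ∧ ¬ (thickGraph G M).Adj v x),
        (G.filter (fun e => v ∈ e ∧ x ∈ e)).card) * Fintype.card V :=
        Nat.mul_le_mul_right _ ((Finset.card_le_card sub).trans Finset.card_biUnion_le)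
    _ = ∑ x ∈ Finset.univ.filter (fun x => x ≠ v ∧ ¬ (thickGraph G M).Adj v x),
        (G.filter (fun e => v ∈ e ∧ x ∈ e)).card * Fintype.card V := by rw [Finset.sum_mul]
    _ ≤ ∑ x ∈ Finset.univ.filter (fun x => x ≠ v ∧ ¬ (thickGraph G M).Adj v x),
        M * Fintype.card V ^ (r - 2) := by
        refine Finset.sum_le_sum ?_
        intro x hx
        rw [Finset.mem_filter] at hx
        exact thin_pair r M hr G hG v x hx.2.1.symm hx.2.2
    _ ≤ Fintype.card V * (M * Fintype.card V ^ (r - 2)) := by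
        rw [Finset.sum_const, smul_eq_mul]
        exact Nat.mul_le_mul_right _ (Finset.card_le_univ _)
    _ = _ := by ring

/-- edges containing a thin pair -/
noncomputable def thinE {V : Type} [Fintype V] [DecidableEq V] (G : Finset (Finset V)) (M : ℕ) :
    Finset (Finset V) := by
  classical exact G.filter (fun e => ∃ x ∈ e, ∃ y ∈ e, x ≠ y ∧ ¬ (thickGraph G M).Adj x y)

theorem mem_thinE {V : Type} [Fintype V] [DecidableEq V] (G : Finset (Finset V)) (M : ℕ)
    (e : Finset V) : e ∈ thinE G M ↔
    e ∈ G ∧ ∃ x ∈ e, ∃ y ∈ e, x ≠ y ∧ ¬ (thickGraph G M).Adj x y := by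
  classical simp [thinE]

theorem thin_total {V : Type} [Fintype V] [DecidableEq V] (r M : ℕ) (hr : 2 ≤ r)
    (G : Finset (Finset V)) (hG : IsRGraph r G) :
    (thinE G M).card ≤ M * Fintype.card V ^ (r - 1) := by
  classical
  calc _ ≤ (Finset.univ.biUnion (fun v =>
        G.filter (fun e => v ∈ e ∧ ∃ x ∈ e, x ≠ v ∧ ¬ (thickGraph G M).Adj v x))).card := by
        refine Finset.card_le_card ?_
        intro e he
        rw [mem_thinE] at he
        obtain ⟨h1, x, hx, y, hy, h2, h3⟩ := he
        rw [Finset.mem_biUnion]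
        refine ⟨x, Finset.mem_univ _, ?_⟩
        rw [Finset.mem_filter]
        exact ⟨h1, hx, y, hy, h2.symm, h3⟩
    _ ≤ Fintype.card V * (M * Fintype.card V ^ (r - 2)) := by
        refine (Finset.card_biUnion_le_card_mul _ _ _ ?_)
        intro v _
        exact thin_at r M hr G hG v
    _ = M * Fintype.card V ^ (r - 2 + 1) := by ring
    _ = _ := by congr 2; omega

theorem sum_deg {V : Type} [Fintype V] [DecidableEq V] (r : ℕ)
    (G : Finset (Finset V)) (hG : IsRGraph r G) :
    ∑ v, (G.filter (fun e => v ∈ e)).card = r * G.card := by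
  have : ∀ v, (G.filter (fun e => v ∈ e)).card = ∑ e ∈ G, if v ∈ e then 1 else 0 := by
    intro v; rw [Finset.card_filter]
  simp_rw [this]
  rw [Finset.sum_comm]
  have : ∀ e ∈ G, (∑ v : V, if v ∈ e then 1 else 0) = r := by
    intro e he
    rw [← Finset.card_filter]
    simpa using hG e he
  rw [Finset.sum_congr rfl this]
  simp [mul_comm]

/-- bad vertices -/
noncomputable def badV {V : Type} [Fintype V] [DecidableEq V] (G : Finset (Finset V)) (r M : ℕ)
    (ε : ℝ) : Finset V := by
  classical exact Finset.univ.filter (fun v =>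
    ε * (Fintype.card V : ℝ) ^ (r - 1) < (((thinE G M).filter (fun e => v ∈ e)).card : ℝ))

theorem mem_badV {V : Type} [Fintype V] [DecidableEq V] (G : Finset (Finset V)) (r M : ℕ)
    (ε : ℝ) (v : V) : v ∈ badV G r M ε ↔
    ε * (Fintype.card V : ℝ) ^ (r - 1) < (((thinE G M).filter (fun e => v ∈ e)).card : ℝ) := by
  classical simp [badV]

theorem badV_card {V : Type} [Fintype V] [DecidableEq V] (r M : ℕ) (hr : 2 ≤ r)
    (G : Finset (Finset V)) (hG : IsRGraph r G) (ε : ℝ) (hε : 0 < ε) :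
    ((badV G r M ε).card : ℝ) ≤ r * M / ε := by
  rcases Nat.eq_zero_or_pos (Fintype.card V) with h0 | hn
  · have : (badV G r M ε).card = 0 := by
      have := Finset.card_le_univ (badV G r M ε); omega
    rw [this]; push_cast; positivity
  rw [le_div_iff₀ hε]
  have hn' : (0:ℝ) < (Fintype.card V : ℝ) ^ (r-1) := by positivity
  refine le_of_mul_le_mul_right ?_ hn'
  have hT : IsRGraph r (thinE G M) := fun e he => hG e ((mem_thinE G M e).1 he).1
  have h1 := sum_deg r (thinE G M) hT
  have h2 := thin_total r M hr G hG
  have h3 : (badV G r M ε).card * (ε * (Fintype.card V : ℝ) ^ (r - 1))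
      ≤ ∑ v ∈ badV G r M ε, (((thinE G M).filter (fun e => v ∈ e)).card : ℝ) := by
    rw [← nsmul_eq_mul]
    refine Finset.card_nsmul_le_sum _ _ _ ?_
    intro v hv
    exact ((mem_badV G r M ε v).1 hv).le
  have h4 : ∑ v ∈ badV G r M ε, (((thinE G M).filter (fun e => v ∈ e)).card : ℝ)
      ≤ ∑ v, (((thinE G M).filter (fun e => v ∈ e)).card : ℝ) :=
    Finset.sum_le_sum_of_subset_of_nonneg (Finset.subset_univ _) (fun _ _ _ => by positivity)
  have h5 : ∑ v, (((thinE G M).filter (fun e => v ∈ e)).card : ℝ) = r * (thinE G M).card := by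
    exact_mod_cast h1
  have h6 : ((thinE G M).card : ℝ) ≤ M * (Fintype.card V : ℝ) ^ (r-1) := by exact_mod_cast h2
  have h7 : (r:ℝ) * (thinE G M).card ≤ r * (M * (Fintype.card V : ℝ) ^ (r-1)) := by gcongr
  nlinarith

def NK1 {V : Type} [Fintype V] [DecidableEq V] (S : SimpleGraph V) (k h s : ℕ) : Prop :=
  ∀ (X : Fin k → Finset V) (q : ℕ),
    (∀ i j, i ≠ j → ∀ v ∈ X i, (X j \ nbr S v).card ≤ q) →
    (∀ i, h + s * q < (X i).card) → ∀ v, ∃ j, ∃ x ∈ X j, ¬ S.Adj v x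

def NK2 {V : Type} [Fintype V] [DecidableEq V] (S : SimpleGraph V) (G : Finset (Finset V))
    (k h s : ℕ) : Prop :=
  ∀ (X : Fin k → Finset V) (q : ℕ),
    (∀ i j, i ≠ j → ∀ v ∈ X i, (X j \ nbr S v).card ≤ q) →
    (∀ i, h + s * q < (X i).card) → ∀ u v, u ≠ v → ∀ e ∈ G, u ∈ e → v ∈ e → ∀ i,
      ∃ j, j ≠ i ∧ ∃ x ∈ X j, ¬ (S.Adj u x ∧ S.Adj v x)

theorem good_deg {V : Type} [Fintype V] [DecidableEq V] (p ρ M : ℕ) (hρ : 1 ≤ ρ) (hp : ρ ≤ p)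
    (G : Finset (Finset V)) (hG : IsRGraph (ρ+1) G) (ε η : ℝ) (hη : η ≤ 1/((p:ℝ)+1))
    (hη0 : 0 < η) (hε : 3 * ε < η * (1/((p:ℝ)+1))^(ρ-1)) (v : V)
    (hdeg : ((p.choose ρ : ℝ) * (1/((p:ℝ)+1))^ρ - ε) * (Fintype.card V : ℝ)^ρ
      ≤ ((G.filter (fun e => v ∈ e)).card : ℝ))
    (hT : ((cl (thickGraph G M) (nbr (thickGraph G M) v) ρ).card : ℝ) ≤
      (p.choose ρ) * (((nbr (thickGraph G M) v).card:ℝ)/p)^ρ + ε * (Fintype.card V:ℝ)^ρ)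
    (hv : v ∉ badV G (ρ+1) M ε) :
    ((p:ℝ) * (1/((p:ℝ)+1)) - p * η) * (Fintype.card V : ℝ) ≤ ((nbr (thickGraph G M) v).card : ℝ) := by
  classical
  have hn : 0 < Fintype.card V := Fintype.card_pos_iff.2 ⟨v⟩
  have hN : (0:ℝ) < Fintype.card V := by exact_mod_cast hn
  set N : ℝ := (Fintype.card V : ℝ) with hNdef
  set b : ℝ := 1/((p:ℝ)+1) with hb
  have hb0 : 0 < b := by positivity
  rw [mem_badV, not_lt, Nat.add_sub_cancel] at hv
  have hinj : ((G.filter (fun e => v ∈ e)).card) ≤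
      (cl (thickGraph G M) (nbr (thickGraph G M) v) ρ).card +
        ((thinE G M).filter (fun e => v ∈ e)).card := by
    have h1 : (G.filter (fun e => v ∈ e)) ⊆
        (G.filter (fun e => v ∈ e ∧ e ∉ thinE G M)) ∪ ((thinE G M).filter (fun e => v ∈ e)) := by
      intro e he
      simp only [Finset.mem_filter, Finset.mem_union] at he ⊢
      tauto
    have h2 : (G.filter (fun e => v ∈ e ∧ e ∉ thinE G M)).card ≤
        (cl (thickGraph G M) (nbr (thickGraph G M) v) ρ).card := by
      refine Finset.card_le_card_of_injOn (fun e => e.erase v) ?_ ?_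
      · intro e he
        rw [Finset.mem_coe, Finset.mem_filter, mem_thinE] at he
        obtain ⟨h1, h2, h3⟩ := he
        have h4 : ∀ x ∈ e, ∀ y ∈ e, x ≠ y → (thickGraph G M).Adj x y := by
          intro x hx y hy hxy
          by_contra h
          exact h3 ⟨h1, x, hx, y, hy, hxy, h⟩
        rw [Finset.mem_coe, mem_cl]
        refine ⟨?_, ?_, ?_⟩
        · intro x hx
          rw [Finset.mem_erase] at hx
          rw [mem_nbr]
          exact h4 v h2 x hx.2 hx.1.symm
        · rw [Finset.card_erase_of_mem h2, hG e h1]; rfl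
        · intro x hx y hy hxy
          exact h4 x (Finset.mem_of_mem_erase hx) y (Finset.mem_of_mem_erase hy) hxy
      · intro e he e' he' h
        rw [Finset.mem_coe, Finset.mem_filter] at he he'
        simp only at h
        rw [← Finset.insert_erase he.2.1, h, Finset.insert_erase he'.2.1]
    have := (Finset.card_le_card h1).trans (Finset.card_union_le _ _)
    omega
  have hinj' : (((G.filter (fun e => v ∈ e)).card : ℝ)) ≤
      ((cl (thickGraph G M) (nbr (thickGraph G M) v) ρ).card : ℝ) +
        (((thinE G M).filter (fun e => v ∈ e)).card : ℝ) := by exact_mod_cast hinj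
  by_contra hcon
  push Not at hcon
  have hp0 : (0:ℝ) < p := by exact_mod_cast (by omega : 0 < p)
  have h1 : ((nbr (thickGraph G M) v).card:ℝ)/p ≤ (b - η) * N := by
    rw [div_le_iff₀ hp0]; nlinarith
  have h2 : (((nbr (thickGraph G M) v).card:ℝ)/p)^ρ ≤ ((b - η) * N)^ρ :=
    pow_le_pow_left₀ (by positivity) h1 _
  have h3 : (b - η)^ρ ≤ b^ρ - η * b^(ρ-1) := by
    obtain ⟨m, rfl⟩ : ∃ m, ρ = m + 1 := ⟨ρ-1, by omega⟩
    rw [Nat.add_sub_cancel, pow_succ, pow_succ]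
    have : (b-η)^m ≤ b^m := pow_le_pow_left₀ (by linarith) (by linarith) _
    have h5 : 0 ≤ b - η := by linarith
    nlinarith
  rw [mul_pow] at h2
  have hNp : 0 < N^ρ := by positivity
  have hC : (1:ℝ) ≤ p.choose ρ := by exact_mod_cast Nat.choose_pos hp
  have h4 : (p.choose ρ : ℝ) * (((nbr (thickGraph G M) v).card:ℝ)/p)^ρ
      ≤ (p.choose ρ : ℝ) * ((b^ρ - η * b^(ρ-1)) * N^ρ) := by
    refine mul_le_mul_of_nonneg_left ?_ (by positivity)
    exact h2.trans (mul_le_mul_of_nonneg_right h3 hNp.le)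
  have h6 : (p.choose ρ : ℝ) * (η * b^(ρ-1)) ≥ η * b^(ρ-1) :=
    le_mul_of_one_le_left (by positivity) hC
  have h7 : ((p.choose ρ : ℝ) * (η * b^(ρ-1))) * N^ρ ≤ 3 * ε * N^ρ := by linarith
  have h8 := le_of_mul_le_mul_right h7 hNp
  linarith

theorem kappa_lt (p ρ : ℕ) (hρ : 1 ≤ ρ) (hp : ρ ≤ p) :
    (p.choose (ρ+1) : ℝ) / (p:ℝ)^(ρ+1) < (p.choose ρ : ℝ) * (1/((p:ℝ)+1))^ρ / ((ρ:ℝ)+1) := by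
  have hp0 : (0:ℝ) < p := by exact_mod_cast (by omega : 0 < p)
  have h1 : (p.choose (ρ+1) : ℝ) * ((ρ:ℝ)+1) = p.choose ρ * ((p:ℝ) - ρ) := by
    have := Nat.choose_succ_right_eq p ρ
    have h2 : ((p - ρ : ℕ) : ℝ) = (p:ℝ) - ρ := by push_cast [hp]; rfl
    rw [← h2]; exact_mod_cast this
  have hC : (0:ℝ) < p.choose ρ := by exact_mod_cast Nat.choose_pos hp
  rw [lt_div_iff₀ (by positivity), div_mul_eq_mul_div, h1, mul_div_assoc]
  refine mul_lt_mul_of_pos_left ?_ hC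
  have hB := one_add_mul_le_pow (a := -(1/((p:ℝ)+1))) (by
    have : 1/((p:ℝ)+1) ≤ 1 := by rw [div_le_one (by positivity)]; linarith
    linarith) ρ
  have h3 : 1 + -(1/((p:ℝ)+1)) = p * (1/((p:ℝ)+1)) := by field_simp; ring
  rw [h3, mul_pow] at hB
  have hρ0 : (0:ℝ) < ρ := by exact_mod_cast (by omega : 0 < ρ)
  have h4 : 1 - (ρ:ℝ)/p < 1 + ρ * -(1/((p:ℝ)+1)) := by
    have : (ρ:ℝ) * (1/((p:ℝ)+1)) < ρ / p := by
      rw [mul_one_div]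
      exact div_lt_div_of_pos_left hρ0 hp0 (by linarith)
    linarith
  have h5 : 1 - (ρ:ℝ)/p = ((p:ℝ) - ρ)/p := by field_simp
  have h6 : ((p:ℝ) - ρ)/p < (p:ℝ)^ρ * (1/((p:ℝ)+1))^ρ := by linarith
  rw [div_lt_iff₀ (by positivity)]
  rw [div_lt_iff₀ hp0] at h6
  calc (p:ℝ) - ρ < _ := h6
    _ = _ := by ring

theorem box_exists {V : Type} [Fintype V] [DecidableEq V] (p ρ M t : ℕ) (hρ : 1 ≤ ρ) (hp : ρ ≤ p)
    (G : Finset (Finset V)) (hG : IsRGraph (ρ+1) G) (ε : ℝ) (hε0 : 0 < ε)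
    (hn : 0 < Fintype.card V)
    (hε : (p.choose (ρ+1) : ℝ) / (p:ℝ)^(ρ+1) + 3 * ε <
      (p.choose ρ : ℝ) * (1/((p:ℝ)+1))^ρ / ((ρ:ℝ)+1))
    (hdeg : ∀ v, ((p.choose ρ : ℝ) * (1/((p:ℝ)+1))^ρ - ε) * (Fintype.card V : ℝ)^ρ
      ≤ ((G.filter (fun e => v ∈ e)).card : ℝ))
    (hTC : (¬ ∃ A : Fin (p+1) → Finset V, (∀ i, A i ⊆ Finset.univ \ badV G (ρ+1) M ε) ∧
      (∀ i, (A i).card = t) ∧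
      ∀ i j, i ≠ j → ∀ x ∈ A i, ∀ y ∈ A j, (thickGraph G M).Adj x y) →
      ((cl (thickGraph G M) (Finset.univ \ badV G (ρ+1) M ε) (ρ+1)).card : ℝ) ≤
      (p.choose (ρ+1)) * (((Finset.univ \ badV G (ρ+1) M ε).card:ℝ)/p)^(ρ+1)
        + ε * (Fintype.card V:ℝ)^(ρ+1))
    (hbig : (M:ℝ) + (badV G (ρ+1) M ε).card ≤ ε * Fintype.card V) :
    ∃ A : Fin (p+1) → Finset V, (∀ i, A i ⊆ Finset.univ \ badV G (ρ+1) M ε) ∧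
      (∀ i, (A i).card = t) ∧
      ∀ i j, i ≠ j → ∀ x ∈ A i, ∀ y ∈ A j, (thickGraph G M).Adj x y := by
  classical
  by_contra hno
  have h1 := hTC hno
  have hN : (0:ℝ) < Fintype.card V := by exact_mod_cast hn
  set B := badV G (ρ+1) M ε with hB
  have hsub : G ⊆ cl (thickGraph G M) (Finset.univ \ B) (ρ+1) ∪ (thinE G M ∪
      B.biUnion (fun v => G.filter (fun e => ({v} : Finset V) ⊆ e))) := by
    intro e he
    by_cases h2 : e ∈ thinE G M
    · simp [h2]
    by_cases h3 : ∃ v ∈ B, v ∈ e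
    · obtain ⟨v, hv, hve⟩ := h3
      rw [Finset.mem_union, Finset.mem_union, Finset.mem_biUnion]
      right; right
      exact ⟨v, hv, by rw [Finset.mem_filter]; exact ⟨he, by simpa using hve⟩⟩
    · rw [Finset.mem_union]
      left
      rw [mem_cl]
      refine ⟨?_, hG e he, ?_⟩
      · intro x hx
        rw [Finset.mem_sdiff]
        exact ⟨Finset.mem_univ _, fun h => h3 ⟨x, h, hx⟩⟩
      · intro x hx y hy hxy
        by_contra h
        exact h2 ((mem_thinE _ _ _).2 ⟨he, x, hx, y, hy, hxy, h⟩)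
  have h2 : (B.biUnion (fun v => G.filter (fun e => ({v} : Finset V) ⊆ e))).card
      ≤ B.card * Fintype.card V ^ ρ := by
    refine Finset.card_biUnion_le_card_mul _ _ _ ?_
    intro v _
    have := card_sup (ρ+1) G hG {v}
    simpa using this
  have h3 := thin_total (ρ+1) M (by omega) G hG
  rw [Nat.add_sub_cancel] at h3
  have h4 : G.card ≤ (cl (thickGraph G M) (Finset.univ \ B) (ρ+1)).card +
      (M * Fintype.card V ^ ρ + B.card * Fintype.card V ^ ρ) := by
    have a1 := (Finset.card_le_card hsub).trans (Finset.card_union_le _ _)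
    have a2 := Finset.card_union_le (thinE G M)
      (B.biUnion (fun v => G.filter (fun e => ({v} : Finset V) ⊆ e)))
    omega
  have h4' : (G.card:ℝ) ≤ ((cl (thickGraph G M) (Finset.univ \ B) (ρ+1)).card:ℝ) +
      ((M:ℝ) + B.card) * (Fintype.card V:ℝ) ^ ρ := by
    have : (G.card:ℝ) ≤ ((cl (thickGraph G M) (Finset.univ \ B) (ρ+1)).card:ℝ) +
      ((M:ℝ) * (Fintype.card V:ℝ) ^ ρ + B.card * (Fintype.card V:ℝ) ^ ρ) := by exact_mod_cast h4
    linarith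
  have h5 := sum_deg (ρ+1) G hG
  have h5' : ∑ v, ((G.filter (fun e => v ∈ e)).card : ℝ) = ((ρ:ℝ)+1) * G.card := by exact_mod_cast h5
  have h6 : (Fintype.card V:ℝ) * (((p.choose ρ : ℝ) * (1/((p:ℝ)+1))^ρ - ε) * (Fintype.card V : ℝ)^ρ)
      ≤ ((ρ:ℝ)+1) * G.card := by
    rw [← h5', ← nsmul_eq_mul]
    exact Finset.card_nsmul_le_sum _ _ _ (fun v _ => hdeg v)
  set N : ℝ := (Fintype.card V : ℝ) with hNdef
  have hp0 : (0:ℝ) < p := by exact_mod_cast (by omega : 0 < p)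
  have h7 : (((Finset.univ \ B).card:ℝ)/p)^(ρ+1) ≤ N^(ρ+1) / (p:ℝ)^(ρ+1) := by
    rw [← div_pow]
    refine pow_le_pow_left₀ (by positivity) ?_ _
    refine div_le_div_of_nonneg_right ?_ hp0.le
    rw [hNdef]; exact_mod_cast Finset.card_le_univ _
  have h8 : ((M:ℝ) + B.card) * N ^ ρ ≤ ε * N^(ρ+1) := by
    calc _ ≤ (ε * N) * N^ρ := by gcongr
      _ = _ := by ring
  have h9 : (p.choose (ρ+1) : ℝ) * (((Finset.univ \ B).card:ℝ)/p)^(ρ+1) ≤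
      (p.choose (ρ+1) : ℝ) / (p:ℝ)^(ρ+1) * N^(ρ+1) := by
    calc _ ≤ (p.choose (ρ+1) : ℝ) * (N^(ρ+1) / (p:ℝ)^(ρ+1)) := by gcongr
      _ = _ := by ring
  have h10 : (G.card : ℝ) ≤ ((p.choose (ρ+1) : ℝ) / (p:ℝ)^(ρ+1) + 2 * ε) * N^(ρ+1) := by linarith
  have hNp : 0 < N^(ρ+1) := by positivity
  have h11 : ((p.choose ρ : ℝ) * (1/((p:ℝ)+1))^ρ - ε) * N^(ρ+1) ≤
      (((ρ:ℝ)+1) * ((p.choose (ρ+1) : ℝ) / (p:ℝ)^(ρ+1) + 2 * ε)) * N^(ρ+1) := by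
    calc _ = N * (((p.choose ρ : ℝ) * (1/((p:ℝ)+1))^ρ - ε) * N^ρ) := by ring
      _ ≤ _ := h6
      _ ≤ ((ρ:ℝ)+1) * (((p.choose (ρ+1) : ℝ) / (p:ℝ)^(ρ+1) + 2 * ε) * N^(ρ+1)) := by gcongr
      _ = _ := by ring
  have h12 := le_of_mul_le_mul_right h11 hNp
  rw [lt_div_iff₀ (by positivity)] at hε
  have hρ0 : (0:ℝ) ≤ ρ := by positivity
  nlinarith

theorem core_exists {V : Type} [Fintype V] [DecidableEq V] (S : SimpleGraph V)
    (G : Finset (Finset V)) (p h s t : ℕ) (K1 : NK1 S (p+1) h s) (K2 : NK2 S G (p+1) h s)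
    (B : Finset V) (A : Fin (p+1) → Finset V) (hAB : ∀ i, A i ⊆ Finset.univ \ B)
    (hAt : ∀ i, (A i).card = t)
    (hA : ∀ i j, i ≠ j → ∀ x ∈ A i, ∀ y ∈ A j, S.Adj x y)
    (η ξ : ℝ)
    (hdeg : ∀ v, v ∉ B → ((p:ℝ) * (1/((p:ℝ)+1)) - p * η) * (Fintype.card V : ℝ) ≤ ((nbr S v).card : ℝ))
    (ht : 2 * h < t) (hξt : 8 * (h:ℝ) ≤ ξ * t) (hη : 8 * ((p:ℝ)+1)^2 * η ≤ ξ) (hη0 : 0 ≤ η)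
    (hB : (B.card:ℝ) ≤ ξ * Fintype.card V) :
    ∃ (Z : Finset V) (ι : V → Fin (p+1)), (∀ v ∈ Z, v ∉ B) ∧
      ((Finset.univ \ Z).card : ℝ) ≤ 2 * ξ * Fintype.card V ∧
      ∀ u ∈ Z, ∀ v ∈ Z, u ≠ v → ι u = ι v → ∀ e ∈ G, u ∈ e → v ∉ e := by
  classical
  have hex : ∀ v, ∃ i, (nbr S v ∩ A i).card ≤ h := by
    intro v
    by_contra hcon
    push Not at hcon
    obtain ⟨j, x, hx, hx2⟩ := K1 (fun i => nbr S v ∩ A i) 0 (by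
      intro i j hij w hw
      rw [Nat.le_zero, Finset.card_eq_zero, Finset.sdiff_eq_empty_iff_subset]
      intro y hy
      rw [mem_nbr]
      exact hA i j hij w (Finset.mem_of_mem_inter_right hw) y (Finset.mem_of_mem_inter_right hy))
      (by intro i; simpa using hcon i) v
    exact hx2 ((mem_nbr _ _ _).1 (Finset.mem_of_mem_inter_left hx))
  choose ι hι using hex
  have hle : ∀ v i, (nbr S v ∩ A i).card ≤ t := fun v i => by
    rw [← hAt i]; exact Finset.card_le_card Finset.inter_subset_right
  set dA : V → ℕ := fun v => ∑ i, (nbr S v ∩ A i).card with hdA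
  have hdecomp : ∀ v, dA v = (nbr S v ∩ A (ι v)).card + ∑ i ∈ Finset.univ.erase (ι v), (nbr S v ∩ A i).card := by
    intro v
    exact (Finset.add_sum_erase _ (fun i => (nbr S v ∩ A i).card) (Finset.mem_univ _)).symm
  have hcarde : ∀ i : Fin (p+1), (Finset.univ.erase i).card = p := by
    intro i; rw [Finset.card_erase_of_mem (Finset.mem_univ _)]; simp
  have hup : ∀ v, dA v ≤ p * t + h := by
    intro v
    rw [hdecomp]
    have : ∑ i ∈ Finset.univ.erase (ι v), (nbr S v ∩ A i).card ≤ p * t := by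
      have := Finset.sum_le_card_nsmul (Finset.univ.erase (ι v)) (fun i => (nbr S v ∩ A i).card) t
        (fun i _ => hle v i)
      rwa [hcarde, smul_eq_mul] at this
    have := hι v
    omega
  -- typical vertices
  have htyp : ∀ v, 4 * (p * t + h) ≤ 4 * dA v + t → ∀ j, j ≠ ι v → 3 * t ≤ 4 * (nbr S v ∩ A j).card := by
    intro v hv j hj
    have h1 := hdecomp v
    rw [← Finset.add_sum_erase _ _ (Finset.mem_erase.2 ⟨hj, Finset.mem_univ j⟩)] at h1
    have hc2 : ((Finset.univ.erase (ι v)).erase j).card + 1 = p := by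
      rw [Finset.card_erase_of_mem (Finset.mem_erase.2 ⟨hj, Finset.mem_univ j⟩), hcarde]
      have := hcarde (ι v)
      have : 0 < (Finset.univ.erase (ι v)).card :=
        Finset.card_pos.2 ⟨j, Finset.mem_erase.2 ⟨hj, Finset.mem_univ j⟩⟩
      omega
    have h2 := Finset.sum_le_card_nsmul ((Finset.univ.erase (ι v)).erase j)
      (fun i => (nbr S v ∩ A i).card) t (fun i _ => hle v i)
    rw [smul_eq_mul] at h2
    have h3 := hι v
    have h4 : p * t = ((Finset.univ.erase (ι v)).erase j).card * t + t := by
      conv_lhs => rw [← hc2]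
      ring
    omega
  -- sum of dA
  have hsum : ∑ v, dA v = ∑ i, ∑ a ∈ A i, (nbr S a).card := by
    rw [hdA, Finset.sum_comm]
    refine Finset.sum_congr rfl ?_
    intro i _
    have e1 : ∀ v, (nbr S v ∩ A i).card = ∑ a ∈ A i, if S.Adj v a then 1 else 0 := by
      intro v
      rw [← Finset.card_filter]
      congr 1; ext a; simp [mem_nbr, and_comm]
    have e2 : ∀ a, (nbr S a).card = ∑ v, if S.Adj v a then 1 else 0 := by
      intro a
      rw [← Finset.card_filter]
      congr 1; ext v; simp [mem_nbr, S.adj_comm]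
    simp_rw [e1, e2]
    rw [Finset.sum_comm]
  set N : ℝ := (Fintype.card V : ℝ) with hN
  have hN0 : 0 ≤ N := by positivity
  have hlow : ((p:ℝ)+1) * (t * (((p:ℝ) * (1/((p:ℝ)+1)) - p * η) * N)) ≤ ∑ v, (dA v : ℝ) := by
    have : (∑ v, (dA v : ℝ)) = ∑ i, ∑ a ∈ A i, ((nbr S a).card : ℝ) := by exact_mod_cast hsum
    rw [this]
    have h1 : ∀ i ∈ (Finset.univ : Finset (Fin (p+1))),
        (t * (((p:ℝ) * (1/((p:ℝ)+1)) - p * η) * N)) ≤ ∑ a ∈ A i, ((nbr S a).card : ℝ) := by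
      intro i _
      rw [← hAt i, ← nsmul_eq_mul]
      refine Finset.card_nsmul_le_sum _ _ _ ?_
      intro a ha
      exact hdeg a (Finset.mem_sdiff.1 (hAB i ha)).2
    have h2 := Finset.card_nsmul_le_sum _ _ _ h1
    rw [nsmul_eq_mul, Finset.card_univ, Fintype.card_fin] at h2
    push_cast at h2
    exact h2
  set T := Finset.univ.filter (fun v => ¬ (4 * (p * t + h) ≤ 4 * dA v + t)) with hT
  have hTsum : (T.card:ℝ) * (t/4) ≤ ∑ v, (((p:ℝ) * t + h) - dA v) := by
    calc (T.card:ℝ) * (t/4) ≤ ∑ v ∈ T, (((p:ℝ) * t + h) - dA v) := by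
          rw [← nsmul_eq_mul]
          refine Finset.card_nsmul_le_sum _ _ _ ?_
          intro v hv
          rw [hT, Finset.mem_filter, not_le] at hv
          have : (4 * (dA v:ℝ) + t) < 4 * ((p:ℝ) * t + h) := by exact_mod_cast hv.2
          linarith
      _ ≤ _ := by
          refine Finset.sum_le_sum_of_subset_of_nonneg (Finset.subset_univ _) ?_
          intro v _ _
          have : (dA v:ℝ) ≤ (p:ℝ) * t + h := by exact_mod_cast hup v
          linarith
  have hTsum2 : ∑ v, (((p:ℝ) * t + h) - dA v) = N * ((p:ℝ) * t + h) - ∑ v, (dA v:ℝ) := by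
    rw [Finset.sum_sub_distrib]; simp [hN]; ring
  have ht0 : (0:ℝ) < t := by exact_mod_cast (by omega : 0 < t)
  have hp1 : ((p:ℝ)+1) * ((p:ℝ) * (1/((p:ℝ)+1)) - p * η) = p - (p+1) * p * η := by
    field_simp
  have hTc : (T.card:ℝ) ≤ ξ * N := by
    have h1 : (T.card:ℝ) * (t/4) ≤ N * h + (p+1) * p * η * t * N := by
      have : ((p:ℝ)+1) * (t * (((p:ℝ) * (1/((p:ℝ)+1)) - p * η) * N)) =
        (p - (p+1) * p * η) * t * N := by rw [← hp1]; ring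
      rw [this] at hlow
      rw [hTsum2] at hTsum
      linarith
    have h2 : N * (8 * h) ≤ N * (ξ * t) := by gcongr
    have h3 : ((p:ℝ)+1) * p * η ≤ ξ / 8 := by
      have : ((p:ℝ)+1) * p * η ≤ ((p:ℝ)+1)^2 * η := by
        refine mul_le_mul_of_nonneg_right ?_ hη0
        nlinarith [(by positivity : (0:ℝ) ≤ p)]
      linarith
    have h4 : ((p:ℝ)+1) * p * η * t * N ≤ ξ/8 * t * N := by gcongr
    have h5 : (T.card:ℝ) * (t/4) ≤ (ξ * N) * (t/4) := by linarith
    exact le_of_mul_le_mul_right h5 (by positivity)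
  refine ⟨Finset.univ \ (B ∪ T), ι, ?_, ?_, ?_⟩
  · intro v hv
    rw [Finset.mem_sdiff, Finset.mem_union] at hv
    tauto
  · have h1 : (Finset.univ \ (Finset.univ \ (B ∪ T))) = B ∪ T := by simp
    rw [h1]
    have h2 : ((B ∪ T).card : ℝ) ≤ B.card + T.card := by exact_mod_cast Finset.card_union_le _ _
    linarith
  · intro u hu v hv huv hι2 e he hue hve
    have tu : 4 * (p * t + h) ≤ 4 * dA u + t := by
      rw [Finset.mem_sdiff, Finset.mem_union, hT, Finset.mem_filter] at hu
      tauto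
    have tv : 4 * (p * t + h) ≤ 4 * dA v + t := by
      rw [Finset.mem_sdiff, Finset.mem_union, hT, Finset.mem_filter] at hv
      tauto
    have hXA : ∀ j, (if j = ι u then A j else (nbr S u ∩ A j) ∩ (nbr S v ∩ A j)) ⊆ A j := by
      intro j
      split_ifs
      · exact subset_rfl
      · exact Finset.inter_subset_left.trans Finset.inter_subset_right
    obtain ⟨j, hj, x, hx, hx2⟩ := K2 (fun j => if j = ι u then A j else (nbr S u ∩ A j) ∩ (nbr S v ∩ A j)) 0
      (by
        intro i j hij w hw
        rw [Nat.le_zero, Finset.card_eq_zero, Finset.sdiff_eq_empty_iff_subset]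
        intro y hy
        rw [mem_nbr]
        exact hA i j hij w (hXA i hw) y (hXA j hy))
      (by
        intro i
        show _ < (if i = ι u then A i else (nbr S u ∩ A i) ∩ (nbr S v ∩ A i)).card
        split_ifs with hi
        · rw [hAt]; omega
        · have h1 := htyp u tu i hi
          have h2 := htyp v tv i (by rwa [← hι2])
          have h3 := Finset.card_union_add_card_inter (nbr S u ∩ A i) (nbr S v ∩ A i)
          have h4 : ((nbr S u ∩ A i) ∪ (nbr S v ∩ A i)).card ≤ t := by
            rw [← hAt i]
            exact Finset.card_le_card (Finset.union_subset Finset.inter_subset_right Finset.inter_subset_right)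
          omega) u v huv e he hue hve (ι u)
    simp only [hj, if_false, Finset.mem_inter, mem_nbr] at hx
    exact hx2 ⟨hx.1.1, hx.2.1⟩

theorem es_le {k : ℕ} (s : Finset (Fin k)) (m : ℕ) (y : Fin k → ℕ) (B : ℝ)
    (h : ∀ c ∈ s, (y c : ℝ) ≤ B) : (es s m y : ℝ) ≤ (s.card.choose m) * B^m := by
  unfold es
  push_cast
  have : ∀ J ∈ s.powersetCard m, (∏ j ∈ J, (y j:ℝ)) ≤ B^m := by
    intro J hJ
    rw [Finset.mem_powersetCard] at hJ
    rw [← hJ.2, ← Finset.prod_const]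
    exact Finset.prod_le_prod (fun _ _ => by positivity) (fun j hj => h j (hJ.1 hj))
  refine (Finset.sum_le_card_nsmul _ _ _ this).trans ?_
  rw [Finset.card_powersetCard, nsmul_eq_mul]

theorem es_upper (p ρ : ℕ) (hρ : 1 ≤ ρ) (hp : ρ ≤ p) (y : Fin (p+1) → ℕ) (i j : Fin (p+1))
    (hij : i ≠ j) (N b β δ : ℝ) (hN : 0 ≤ N) (hb : 0 ≤ b) (hbβ : b ≤ β) (hδ : 0 ≤ δ)
    (hi : (y i : ℝ) ≤ δ * N) (hj : (y j : ℝ) ≤ 3/4 * b * N) (hy : ∀ c, (y c : ℝ) ≤ β * N)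
    (hyN : ∀ c, (y c : ℝ) ≤ N) :
    (es Finset.univ ρ y : ℝ) ≤ (p.choose ρ * β^ρ - b/4 * b^(ρ-1) + 2^(p+1) * δ) * N^ρ := by
  obtain ⟨m, rfl⟩ : ∃ m, ρ = m + 1 := ⟨ρ-1, by omega⟩
  obtain ⟨w, rfl⟩ : ∃ w, p = w + 1 := ⟨p-1, by omega⟩
  rw [Nat.add_sub_cancel]
  set s' : Finset (Fin (w+1+1)) := (Finset.univ.erase i).erase j with hs'
  have hj' : j ∈ (Finset.univ.erase i : Finset (Fin (w+1+1))) := by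
    rw [Finset.mem_erase]; exact ⟨hij.symm, Finset.mem_univ _⟩
  have e1 : (Finset.univ.erase i : Finset (Fin (w+1+1))) = insert j s' := by
    rw [hs', Finset.insert_erase hj']
  have e2 : (Finset.univ : Finset (Fin (w+1+1))) = insert i (Finset.univ.erase i) := by
    rw [Finset.insert_erase (Finset.mem_univ _)]
  have c1 : (Finset.univ.erase i : Finset (Fin (w+1+1))).card = w+1 := by
    rw [Finset.card_erase_of_mem (Finset.mem_univ _)]; simp
  have c2 : s'.card = w := by
    rw [hs', Finset.card_erase_of_mem hj', c1]; rfl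
  have h1 : es Finset.univ (m+1) y = es (Finset.univ.erase i) (m+1) y + y i * es (Finset.univ.erase i) m y := by
    rw [e2, es_insert _ _ (Finset.notMem_erase _ _), ← e2]
  have h2 : es (Finset.univ.erase i) (m+1) y = es s' (m+1) y + y j * es s' m y := by
    rw [e1, es_insert _ _ (by rw [hs']; exact Finset.notMem_erase _ _)]
  have a1 := es_le s' (m+1) y (β*N) (fun c _ => hy c)
  have a2 := es_le s' m y (β*N) (fun c _ => hy c)
  have a3 := es_le (Finset.univ.erase i) m y N (fun c _ => hyN c)
  rw [c2] at a1 a2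
  rw [c1] at a3
  rw [h1, h2]
  push_cast
  have hβ : 0 ≤ β := hb.trans hbβ
  have t1 : (y i:ℝ) * es (Finset.univ.erase i) m y ≤ 2^(w+1+1) * δ * N^(m+1) := by
    have : ((w+1).choose m : ℝ) ≤ 2^(w+1+1) := by
      have h3 : (w+1).choose m ≤ 2^(w+1) := Nat.choose_le_two_pow _ _
      have h4 : 2^(w+1) ≤ 2^(w+1+1) := Nat.pow_le_pow_right (by norm_num) (by omega)
      exact_mod_cast h3.trans h4
    calc _ ≤ (δ * N) * (2^(w+1+1) * N^m) := by
          refine mul_le_mul hi (a3.trans ?_) (by positivity) (by positivity)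
          gcongr
      _ = _ := by ring
  have t2 : (y j:ℝ) * es s' m y ≤ (w.choose m) * (3/4*b) * β^m * N^(m+1) := by
    calc _ ≤ (3/4*b*N) * ((w.choose m) * (β*N)^m) := by
          refine mul_le_mul hj a2 (by positivity) (by positivity)
      _ = _ := by ring
  have t3 : (es s' (m+1) y : ℝ) ≤ (w.choose (m+1)) * β^(m+1) * N^(m+1) := by
    calc _ ≤ _ := a1
      _ = _ := by ring
  have hC : (1:ℝ) ≤ w.choose m := by exact_mod_cast Nat.choose_pos (by omega)
  have hCC : (((w+1).choose (m+1) : ℕ):ℝ) = w.choose m + w.choose (m+1) := by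
    exact_mod_cast Nat.choose_succ_succ w m
  have t4 : b/4 * b^m ≤ (w.choose m) * ((β - 3/4*b) * β^m) := by
    calc b/4 * b^m ≤ (β - 3/4*b) * β^m := by
          refine mul_le_mul (by linarith) (pow_le_pow_left₀ hb hbβ _) (by positivity) (by linarith)
      _ ≤ _ := le_mul_of_one_le_left (mul_nonneg (by linarith) (by positivity)) hC
  rw [hCC]
  have hNp : 0 ≤ N^(m+1) := by positivity
  have t5 := mul_le_mul_of_nonneg_right t4 hNp
  have : ((w.choose m:ℝ) + w.choose (m+1)) * β^(m+1) = w.choose m * ((β - 3/4*b) * β^m)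
     + w.choose m * (3/4*b) * β^m + w.choose (m+1) * β^(m+1) := by ring
  rw [this]
  nlinarith

theorem es_lower {V : Type} [Fintype V] [DecidableEq V] (p ρ M : ℕ) (hρ : 1 ≤ ρ)
    (G : Finset (Finset V)) (hG : IsRGraph (ρ+1) G) (Z : Finset V) (ι : V → Fin (p+1))
    (hZ : ∀ u ∈ Z, ∀ v ∈ Z, u ≠ v → ι u = ι v → ∀ e ∈ G, u ∈ e → v ∉ e) (v : V) :
    (G.filter (fun e => v ∈ e)).card ≤
      es Finset.univ ρ (fun i => ((nbr (thickGraph G M) v ∩ Z).filter (fun u => ι u = i)).card) +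
      ((Finset.univ \ Z).card * Fintype.card V ^ (ρ-1) + M * Fintype.card V ^ (ρ-1)) := by
  classical
  have h1 := thin_at (ρ+1) M (by omega) G hG v
  rw [show ρ + 1 - 2 = ρ - 1 by omega] at h1
  set D1 := G.filter (fun e => v ∈ e ∧ ∃ x ∈ e, x ≠ v ∧ ¬ (thickGraph G M).Adj v x) with hD1
  set D2 := ((Finset.univ \ Z).erase v).biUnion (fun x => G.filter (fun e => ({v, x} : Finset V) ⊆ e)) with hD2
  have h2 : D2.card ≤ (Finset.univ \ Z).card * Fintype.card V ^ (ρ-1) := by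
    calc _ ≤ ((Finset.univ \ Z).erase v).card * Fintype.card V ^ (ρ-1) := by
          refine Finset.card_biUnion_le_card_mul _ _ _ ?_
          intro x hx
          have := card_sup (ρ+1) G hG {v, x}
          rwa [Finset.card_pair (Finset.ne_of_mem_erase hx).symm, show ρ + 1 - 2 = ρ - 1 by omega] at this
      _ ≤ _ := Nat.mul_le_mul_right _ (Finset.card_le_card (Finset.erase_subset _ _))
  set D3 := G.filter (fun e => v ∈ e ∧ e ∉ D1 ∧ e ∉ D2) with hD3
  have h3 : D3.card ≤ es Finset.univ ρ (fun i => ((nbr (thickGraph G M) v ∩ Z).filter (fun u => ι u = i)).card) := by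
    have hcc := cross_count ι (nbr (thickGraph G M) v ∩ Z) ρ
    rw [← hcc]
    refine Finset.card_le_card_of_injOn (fun e => e.erase v) ?_ ?_
    · intro e he
      rw [Finset.mem_coe, hD3, Finset.mem_filter] at he
      obtain ⟨he, hv, n1, n2⟩ := he
      have z1 : ∀ x ∈ e, x ≠ v → (thickGraph G M).Adj v x := by
        intro x hx hxv
        by_contra hc
        exact n1 (Finset.mem_filter.2 ⟨he, hv, x, hx, hxv, hc⟩)
      have z2 : ∀ x ∈ e, x ≠ v → x ∈ Z := by
        intro x hx hxv
        by_contra hc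
        refine n2 ?_
        rw [hD2, Finset.mem_biUnion]
        refine ⟨x, by simp [hc, hxv], ?_⟩
        rw [Finset.mem_filter]
        refine ⟨he, ?_⟩
        intro y hy
        rw [Finset.mem_insert, Finset.mem_singleton] at hy
        rcases hy with rfl | rfl <;> assumption
      refine Finset.mem_coe.2 ((@Finset.mem_filter _ _ (_) _ _).2 ⟨Finset.mem_powersetCard.2 ⟨?_, ?_⟩, ?_⟩)
      · intro x hx
        rw [Finset.mem_erase] at hx
        rw [Finset.mem_inter, mem_nbr]
        exact ⟨z1 x hx.2 hx.1, z2 x hx.2 hx.1⟩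
      · rw [Finset.card_erase_of_mem hv, hG e he]; rfl
      · intro x hx y hy hxy
        by_contra hc
        rw [Finset.mem_erase] at hx hy
        exact hZ x (z2 x hx.2 hx.1) y (z2 y hy.2 hy.1) hc hxy e he hx.2 hy.2
    · intro e he e' he' h
      rw [Finset.mem_coe, hD3, Finset.mem_filter] at he he'
      simp only at h
      rw [← Finset.insert_erase he.2.1, h, Finset.insert_erase he'.2.1]
  have hsub : G.filter (fun e => v ∈ e) ⊆ D3 ∪ (D2 ∪ D1) := by
    intro e he
    rw [Finset.mem_filter] at he
    by_cases n1 : e ∈ D1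
    · simp [n1]
    by_cases n2 : e ∈ D2
    · simp [n2]
    rw [Finset.mem_union]; left
    exact Finset.mem_filter.2 ⟨he.1, he.2, n1, n2⟩
  have a1 := (Finset.card_le_card hsub).trans (Finset.card_union_le _ _)
  have a2 := Finset.card_union_le D2 D1
  omega

theorem stage2 {V : Type} [Fintype V] [DecidableEq V] (p ρ M h s : ℕ) (hρ : 1 ≤ ρ) (hp : ρ ≤ p)
    (G : Finset (Finset V)) (hG : IsRGraph (ρ+1) G) (hn : 0 < Fintype.card V)
    (K1 : NK1 (thickGraph G M) (p+1) h s) (K2 : NK2 (thickGraph G M) G (p+1) h s)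
    (B Z : Finset V) (ι : V → Fin (p+1)) (η ξ ε b : ℝ) (hb : b = 1/((p:ℝ)+1))
    (hdeg : ∀ v, v ∉ B → ((p:ℝ) * b - p * η) * (Fintype.card V : ℝ)
      ≤ ((nbr (thickGraph G M) v).card : ℝ))
    (hZB : ∀ v ∈ Z, v ∉ B)
    (hZn : ((Finset.univ \ Z).card : ℝ) ≤ 2 * ξ * Fintype.card V)
    (hZ : ∀ u ∈ Z, ∀ v ∈ Z, u ≠ v → ι u = ι v → ∀ e ∈ G, u ∈ e → v ∉ e)
    (hGdeg : ∀ v, ((p.choose ρ : ℝ) * b^ρ - ε) * (Fintype.card V : ℝ)^ρ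
      ≤ ((G.filter (fun e => v ∈ e)).card : ℝ))
    (hεξ : ε ≤ ξ) (hξ0 : 0 < ξ) (hη0 : 0 ≤ η) (hη : 8 * ((p:ℝ)+1)^2 * η ≤ ξ)
    (hM : (M:ℝ) ≤ ξ * Fintype.card V) (hh : (h:ℝ) < ξ * Fintype.card V)
    (hδ : 5 * ((s:ℝ)+1) * ξ + 3 * ξ ≤ b / 2)
    (hpoly : (p.choose ρ : ℝ) * (b+ξ)^ρ - b/4 * b^(ρ-1) + 2^(p+1) * (5 * ((s:ℝ)+1) * ξ) + 4 * ξ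
      < (p.choose ρ : ℝ) * b^ρ) :
    ∃ χ : V → Fin (p+1), ∀ e ∈ G, ∀ u ∈ e, ∀ v ∈ e, χ u = χ v → u = v := by
  classical
  have hN0 : (0:ℝ) < Fintype.card V := by exact_mod_cast hn
  set N : ℝ := (Fintype.card V : ℝ) with hN
  set S := thickGraph G M with hS
  set δ : ℝ := 5 * ((s:ℝ)+1) * ξ with hδdef
  have hδ0 : 0 < δ := by positivity
  have hb0 : 0 < b := by rw [hb]; positivity
  have hpb : (p:ℝ) * b = 1 - b := by rw [hb]; field_simp; ring
  set C : Fin (p+1) → Finset V := fun i => Z.filter (fun u => ι u = i) with hC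
  have memC : ∀ i x, x ∈ C i ↔ x ∈ Z ∧ ι x = i := by intro i x; simp [hC]
  have hindep : ∀ i, ∀ u ∈ C i, ∀ v ∈ C i, ¬ S.Adj u v := by
    intro i u hu v hv hadj
    have hadj' : u ≠ v ∧ ∀ W : Finset V, W.card ≤ M → u ∉ W → v ∉ W →
      ∃ e ∈ G, u ∈ e ∧ v ∈ e ∧ Disjoint e W := hadj
    obtain ⟨e, he, h1, h2, _⟩ := hadj'.2 ∅ (by simp) (by simp) (by simp)
    rw [memC] at hu hv
    exact hZ u hu.1 v hv.1 hadj'.1 (hu.2.trans hv.2.symm) e he h1 h2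
  have hpη : (p:ℝ) * η ≤ ξ / 8 ∧ (p:ℝ)^2 * η ≤ ξ/8 := by
    have hp0 : (0:ℝ) ≤ p := by positivity
    have a1 : (p:ℝ) ≤ ((p:ℝ)+1)^2 := by nlinarith
    have a2 : (p:ℝ)^2 ≤ ((p:ℝ)+1)^2 := by nlinarith
    have := mul_le_mul_of_nonneg_right a1 hη0
    have := mul_le_mul_of_nonneg_right a2 hη0
    constructor <;> linarith
  have hCup' : ∀ i, ((C i).card : ℝ) ≤ (b + p * η) * N := by
    intro i
    rcases (C i).eq_empty_or_nonempty with h0 | ⟨v, hv⟩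
    · rw [h0]; simp; positivity
    · have hd : Disjoint (C i) (nbr S v) := by
        rw [Finset.disjoint_left]
        intro x hx hx2
        exact hindep i v hv x hx ((mem_nbr _ _ _).1 hx2)
      have h1 : (C i).card + (nbr S v).card ≤ Fintype.card V := by
        rw [← Finset.card_union_of_disjoint hd]; exact Finset.card_le_univ _
      have h1' : ((C i).card:ℝ) + (nbr S v).card ≤ N := by rw [hN]; exact_mod_cast h1
      have h2 := hdeg v (hZB v ((memC i v).1 hv).1)
      rw [hpb] at h2
      linarith
  have hCup : ∀ i, ((C i).card : ℝ) ≤ (b + ξ) * N := by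
    intro i
    refine (hCup' i).trans (mul_le_mul_of_nonneg_right ?_ hN0.le)
    linarith [hpη.1]
  have hCsum : ∑ i, (C i).card = Z.card := by
    rw [Finset.card_eq_sum_card_fiberwise (f := ι) (t := Finset.univ) (by simp)]
  have hZcard : (Z.card:ℝ) ≥ (1 - 2 * ξ) * N := by
    have : ((Finset.univ \ Z).card:ℝ) + Z.card = N := by
      rw [hN]; exact_mod_cast Finset.card_sdiff_add_card_eq_card (Finset.subset_univ Z)
    linarith
  have hClow : ∀ i, (b - 3 * ξ) * N ≤ ((C i).card : ℝ) := by
    intro i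
    have h1 : ((C i).card:ℝ) + ∑ j ∈ Finset.univ.erase i, ((C j).card:ℝ) = Z.card := by
      rw [Finset.add_sum_erase _ (fun j => ((C j).card:ℝ)) (Finset.mem_univ _)]
      exact_mod_cast hCsum
    have h2 := Finset.sum_le_card_nsmul (Finset.univ.erase i) (fun j => ((C j).card:ℝ)) _ (fun j _ => hCup' j)
    rw [Finset.card_erase_of_mem (Finset.mem_univ _), nsmul_eq_mul] at h2
    simp only [Finset.card_univ, Fintype.card_fin, Nat.add_sub_cancel] at h2
    have h3 : (p:ℝ) * ((b + p * η) * N) = (1 - b + (p:ℝ)^2 * η) * N := by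
      rw [← hpb]; ring
    rw [h3] at h2
    have h4 := mul_le_mul_of_nonneg_right hpη.2 hN0.le
    nlinarith
  have hcross : ∀ i j, i ≠ j → ∀ v ∈ C i, ((C j \ nbr S v).card : ℝ) ≤ 4 * ξ * N := by
    intro i j hij v hv
    have hd : Disjoint (C i) (nbr S v) := by
      rw [Finset.disjoint_left]
      intro x hx hx2
      exact hindep i v hv x hx ((mem_nbr _ _ _).1 hx2)
    have hd2 : Disjoint (C i ∪ nbr S v) (C j \ nbr S v) := by
      rw [Finset.disjoint_left]
      intro x hx hx2
      rw [Finset.mem_sdiff, memC] at hx2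
      rw [Finset.mem_union, memC] at hx
      rcases hx with hx | hx
      · exact hij (hx.2.symm.trans hx2.1.2)
      · exact hx2.2 hx
    have h1 : (C i).card + (nbr S v).card + (C j \ nbr S v).card ≤ Fintype.card V := by
      rw [← Finset.card_union_of_disjoint hd, ← Finset.card_union_of_disjoint hd2]
      exact Finset.card_le_univ _
    have h1' : ((C i).card:ℝ) + (nbr S v).card + (C j \ nbr S v).card ≤ N := by rw [hN]; exact_mod_cast h1
    have h2 := hdeg v (hZB v ((memC i v).1 hv).1)
    rw [hpb] at h2
    have h3 := hClow i
    have h4 := mul_le_mul_of_nonneg_right hpη.1 hN0.le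
    nlinarith
  set q : ℕ := ⌊4 * ξ * N⌋₊ with hq
  have hcrossq : ∀ i j, i ≠ j → ∀ v ∈ C i, (C j \ nbr S v).card ≤ q := by
    intro i j hij v hv
    exact Nat.le_floor (hcross i j hij v hv)
  have hbig : ∀ X : Finset V, δ * N ≤ X.card → h + s * q < X.card := by
    intro X hX
    have h1 : (q:ℝ) ≤ 4 * ξ * N := Nat.floor_le (by positivity)
    have h2 : (h:ℝ) + s * q < X.card := by
      have h3 : (s:ℝ) * q ≤ s * (4 * ξ * N) := by gcongr
      have h4 : (0:ℝ) ≤ s * ξ * N := by positivity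
      have h5 : (0:ℝ) ≤ ξ * N := by positivity
      rw [hδdef] at hX
      nlinarith
    exact_mod_cast h2
  have hsubcross : ∀ X : Fin (p+1) → Finset V, (∀ i, X i ⊆ C i) →
      ∀ i j, i ≠ j → ∀ v ∈ X i, (X j \ nbr S v).card ≤ q := by
    intro X hX i j hij v hv
    exact (Finset.card_le_card (Finset.sdiff_subset_sdiff (hX j) (subset_refl _))).trans
      (hcrossq i j hij v (hX i hv))
  have hexi : ∀ v, ∃ i, ((nbr S v ∩ C i).card : ℝ) < δ * N := by
    intro v
    by_contra hc
    push Not at hc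
    obtain ⟨j, x, hx, hx2⟩ := K1 (fun i => nbr S v ∩ C i) q
      (hsubcross _ (fun i => Finset.inter_subset_right)) (fun i => hbig _ (hc i)) v
    exact hx2 ((mem_nbr _ _ _).1 (Finset.mem_of_mem_inter_left hx))
  choose χ hχ using hexi
  have hother : ∀ v j, j ≠ χ v → 3/4 * b * N ≤ ((nbr S v ∩ C j).card : ℝ) := by
    intro v j hj
    by_contra hc
    push Not at hc
    have hyC : ∀ i, (nbr S v ∩ Z).filter (fun u => ι u = i) = nbr S v ∩ C i := by
      intro i
      ext x
      simp only [Finset.mem_filter, Finset.mem_inter, memC]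
      tauto
    have h1 := es_lower p ρ M hρ G hG Z ι hZ v
    simp_rw [← hS, hyC] at h1
    have h2 := es_upper p ρ hρ hp (fun i => (nbr S v ∩ C i).card) (χ v) j hj.symm N b (b+ξ) δ
      hN0.le hb0.le (by linarith) hδ0.le (hχ v).le hc.le
      (fun i => le_trans (by exact_mod_cast Finset.card_le_card Finset.inter_subset_right) (hCup i))
      (fun i => by rw [hN]; exact_mod_cast Finset.card_le_univ _)
    have h1' : ((G.filter (fun e => v ∈ e)).card : ℝ) ≤
        (es Finset.univ ρ (fun i => (nbr S v ∩ C i).card) : ℝ) +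
        (((Finset.univ \ Z).card:ℝ) * N^(ρ-1) + M * N^(ρ-1)) := by
      rw [hN]; exact_mod_cast h1
    have h3 := hGdeg v
    have hNs : N * N^(ρ-1) = N^ρ := by
      rw [← pow_succ']; congr 1; omega
    have h4 : ((Finset.univ \ Z).card:ℝ) * N^(ρ-1) ≤ 2 * ξ * N^ρ := by
      rw [← hNs, ← mul_assoc]; gcongr
    have h5 : (M:ℝ) * N^(ρ-1) ≤ ξ * N^ρ := by
      rw [← hNs, ← mul_assoc]; gcongr
    have hNp : 0 < N^ρ := by positivity
    have h6 : ((p.choose ρ : ℝ) * b^ρ - ε) * N^ρ ≤ ((p.choose ρ : ℝ) * (b+ξ)^ρ - b/4 * b^(ρ-1) + 2^(p+1) * δ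
      + 3 * ξ) * N^ρ := by
      linarith
    have h7 := le_of_mul_le_mul_right h6 hNp
    linarith
  refine ⟨χ, ?_⟩
  intro e he u hu v hv huv
  by_contra hne
  set X : Fin (p+1) → Finset V := fun j => if j = χ u then C j else (nbr S u ∩ C j) ∩ (nbr S v ∩ C j) with hX
  have hXC : ∀ j, X j ⊆ C j := by
    intro j
    simp only [hX]
    split_ifs
    · exact subset_rfl
    · exact Finset.inter_subset_left.trans Finset.inter_subset_right
  obtain ⟨j, hj, x, hx, hx2⟩ := K2 X q (hsubcross X hXC) (by
      intro i
      apply hbig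
      simp only [hX]
      split_ifs with hi
      · refine le_trans ?_ (hClow i)
        refine mul_le_mul_of_nonneg_right ?_ hN0.le
        linarith
      · have h1 := hother u i hi
        have h2 := hother v i (by rwa [← huv])
        have h3 := Finset.card_union_add_card_inter (nbr S u ∩ C i) (nbr S v ∩ C i)
        have h4 : ((nbr S u ∩ C i) ∪ (nbr S v ∩ C i)).card ≤ (C i).card :=
          Finset.card_le_card (Finset.union_subset Finset.inter_subset_right Finset.inter_subset_right)
        have h3' : (((nbr S u ∩ C i) ∪ (nbr S v ∩ C i)).card : ℝ) +
          (((nbr S u ∩ C i) ∩ (nbr S v ∩ C i)).card:ℝ) = ((nbr S u ∩ C i).card:ℝ) + (nbr S v ∩ C i).card := by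
          exact_mod_cast h3
        have h4' : (((nbr S u ∩ C i) ∪ (nbr S v ∩ C i)).card : ℝ) ≤ (b+ξ) * N :=
          le_trans (by exact_mod_cast h4) (hCup i)
        have h5 : δ * N ≤ (b/2 - ξ) * N := mul_le_mul_of_nonneg_right (by linarith) hN0.le
        linarith) u v hne e he hu hv (χ u)
  simp only [hX, hj, if_false, Finset.mem_inter, mem_nbr] at hx
  exact hx2 ⟨hx.1.1, hx.2.1⟩

theorem param_exists (p ρ s : ℕ) (b : ℝ) (hb : 0 < b) :
    ∃ ξ : ℝ, 0 < ξ ∧ 5 * ((s:ℝ)+1) * ξ + 3 * ξ ≤ b / 2 ∧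
    (p.choose ρ : ℝ) * (b+ξ)^ρ - b/4 * b^(ρ-1) + 2^(p+1) * (5 * ((s:ℝ)+1) * ξ) + 4 * ξ
      < (p.choose ρ : ℝ) * b^ρ := by
  have c1 : Continuous (fun ξ : ℝ => 5 * ((s:ℝ)+1) * ξ + 3 * ξ) := by fun_prop
  have c2 : Continuous (fun ξ : ℝ => (p.choose ρ : ℝ) * (b+ξ)^ρ - b/4 * b^(ρ-1)
    + 2^(p+1) * (5 * ((s:ℝ)+1) * ξ) + 4 * ξ) := by fun_prop
  have e1 : ∀ᶠ ξ in nhds (0:ℝ), 5 * ((s:ℝ)+1) * ξ + 3 * ξ < b / 2 := by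
    refine c1.continuousAt.eventually_lt_const ?_
    simp; exact hb
  have e2 : ∀ᶠ ξ in nhds (0:ℝ), (p.choose ρ : ℝ) * (b+ξ)^ρ - b/4 * b^(ρ-1)
    + 2^(p+1) * (5 * ((s:ℝ)+1) * ξ) + 4 * ξ < (p.choose ρ : ℝ) * b^ρ := by
    refine c2.continuousAt.eventually_lt_const ?_
    simp; positivity
  have e3 : ∀ᶠ ξ in nhdsWithin (0:ℝ) (Set.Ioi 0), 0 < ξ := eventually_mem_nhdsWithin
  obtain ⟨ξ, h1, h2, h3⟩ := ((e3.and ((e1.and e2).filter_mono nhdsWithin_le_nhds))).exists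
  exact ⟨ξ, h1, h2.le, h3⟩

theorem structure_lemma {α : Type*} [Fintype α] [DecidableEq α] (p ρ : ℕ) (hρ : 1 ≤ ρ) (hp : ρ ≤ p)
    (F : SimpleGraph α) [DecidableRel F.Adj] (c : α → Fin (p+1)) (a0 b0 : α)
    (hc : CritCol F c a0 b0) :
    ∃ ε : ℝ, 0 < ε ∧ ∃ n0 : ℕ, ∀ (V : Type) [Fintype V] [DecidableEq V] (G : Finset (Finset V)),
      n0 ≤ Fintype.card V → IsRGraph (ρ+1) G → ¬ ContainsCopy (expansion (ρ+1) F) G →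
      (∀ v, ((p.choose ρ : ℝ) * (1/((p:ℝ)+1))^ρ - ε) * (Fintype.card V : ℝ)^ρ
        ≤ ((G.filter (fun e => v ∈ e)).card : ℝ)) →
      ∃ χ : V → Fin (p+1), ∀ e ∈ G, ∀ u ∈ e, ∀ v ∈ e, χ u = χ v → u = v := by
  set s := Fintype.card α with hs
  set h := ρ + 1 + s with hh
  set M := s + (F.edgeFinset.card + 1) * (ρ+1) with hM
  set b : ℝ := 1/((p:ℝ)+1) with hb
  have hb0 : 0 < b := by positivity
  obtain ⟨ξ, hξ0, hξ1, hξ2⟩ := param_exists p ρ s b hb0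
  set η : ℝ := ξ / (8 * ((p:ℝ)+1)^2) with hη
  have hη0 : 0 < η := by positivity
  have hηξ : 8 * ((p:ℝ)+1)^2 * η ≤ ξ := by rw [hη]; field_simp; exact le_refl _
  have hηb : η ≤ b := by
    have : η ≤ ξ := by
      rw [hη]
      refine div_le_self hξ0.le ?_
      nlinarith [(by positivity : (0:ℝ) ≤ p)]
    have h2 : (0:ℝ) ≤ 5 * ((s:ℝ)+1) * ξ := by positivity
    linarith
  have hk := kappa_lt p ρ hρ hp
  set gap : ℝ := (p.choose ρ : ℝ) * (1/((p:ℝ)+1))^ρ / ((ρ:ℝ)+1) - (p.choose (ρ+1) : ℝ) / (p:ℝ)^(ρ+1) with hgap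
  have hgap0 : 0 < gap := by rw [hgap]; linarith
  set ε : ℝ := min ξ (min (η * b^(ρ-1) / 4) (gap/4)) with hε
  have hε0 : 0 < ε := by
    rw [hε]; refine lt_min hξ0 (lt_min (by positivity) (by positivity))
  have hε1 : ε ≤ ξ := min_le_left _ _
  have hε2 : ε ≤ η * b^(ρ-1) / 4 := (min_le_right _ _).trans (min_le_left _ _)
  have hε3 : ε ≤ gap / 4 := (min_le_right _ _).trans (min_le_right _ _)
  have hpos2 : 0 < η * b^(ρ-1) := by positivity
  set t : ℕ := 2 * h + 1 + ⌈8 * (h:ℝ) / ξ⌉₊ with ht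
  have ht1 : 2 * h < t := by omega
  have ht2 : 8 * (h:ℝ) ≤ ξ * t := by
    have h1 : 8 * (h:ℝ) / ξ ≤ (⌈8 * (h:ℝ) / ξ⌉₊ : ℝ) := Nat.le_ceil _
    have h2 : (⌈8 * (h:ℝ) / ξ⌉₊ : ℝ) ≤ t := by rw [ht]; push_cast; nlinarith [(by positivity : (0:ℝ) ≤ h)]
    rw [div_le_iff₀ hξ0] at h1
    nlinarith
  obtain ⟨n1, hn1⟩ := turan_count p (by omega) ρ (by omega) t (by omega) ε hε0
  obtain ⟨n2, hn2⟩ := turan_count p (by omega) (ρ+1) (by omega) t (by omega) ε hε0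
  set R : ℝ := ((M:ℝ) + ((ρ+1 : ℕ):ℝ) * M / ε + h + 1) / ε with hR
  refine ⟨ε, hε0, n1 + n2 + ⌈R⌉₊ + 1, ?_⟩
  intro V _ _ G hn hG hfree hdeg
  classical
  have hRN : R ≤ (Fintype.card V : ℝ) := by
    have h1 : R ≤ (⌈R⌉₊ : ℝ) := Nat.le_ceil _
    have h2 : ⌈R⌉₊ ≤ Fintype.card V := by omega
    exact h1.trans (by exact_mod_cast h2)
  rw [hR, div_le_iff₀ hε0] at hRN
  have hn0 : 0 < Fintype.card V := by omega
  have hN0 : (0:ℝ) < Fintype.card V := by exact_mod_cast hn0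
  have hξN : ε * Fintype.card V ≤ ξ * Fintype.card V := mul_le_mul_of_nonneg_right hε1 hN0.le
  have q1 : (0:ℝ) ≤ ((ρ+1 : ℕ):ℝ) * M / ε := by positivity
  have q2 : (0:ℝ) ≤ M := by positivity
  have q3 : (0:ℝ) ≤ h := by positivity
  set S := thickGraph G M with hS
  have K1 : NK1 S (p+1) h s := by
    intro X q hq hX v
    by_contra hcon
    push Not at hcon
    exact hfree (key1 (ρ+1) M (by omega) F G hG (le_refl _) c a0 b0 hc X q hq hX v hcon)
  have K2 : NK2 S G (p+1) h s := by
    intro X q hq hX u v huv e he hu hv i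
    by_contra hcon
    refine hfree (key2 (ρ+1) M F G hG (le_refl _) c a0 b0 hc X q hq hX u v huv e he hu hv i ?_)
    intro j hj x hx
    by_contra h5
    exact hcon ⟨j, hj, x, hx, h5⟩
  have hbad := badV_card (ρ+1) M (by omega) G hG ε hε0
  have hdegS : ∀ v, v ∉ badV G (ρ+1) M ε →
      ((p:ℝ) * b - p * η) * (Fintype.card V : ℝ) ≤ ((nbr S v).card : ℝ) := by
    intro v hv
    refine good_deg p ρ M hρ hp G hG ε η hηb hη0 (by linarith) v (hdeg v) ?_ hv
    refine hn1 V S (nbr S v) (by omega) ?_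
    rintro ⟨A, hA1, hA2, hA3⟩
    obtain ⟨j, x, hx, hx2⟩ := K1 A 0 (by
      intro i j hij w hw
      rw [Nat.le_zero, Finset.card_eq_zero, Finset.sdiff_eq_empty_iff_subset]
      intro y hy
      rw [mem_nbr]
      exact hA3 i j hij w hw y hy) (by intro i; rw [hA2]; omega) v
    exact hx2 ((mem_nbr _ _ _).1 (hA1 j hx))
  obtain ⟨A, hA1, hA2, hA3⟩ := box_exists p ρ M t hρ hp G hG ε hε0 hn0
    (by rw [hgap] at hε3 hgap0; linarith) hdeg (hn2 V S _ (by omega)) (by linarith)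
  obtain ⟨Z, ι, hZ1, hZ2, hZ3⟩ := core_exists S G p h s t K1 K2 (badV G (ρ+1) M ε) A hA1 hA2 hA3
    η ξ hdegS ht1 ht2 hηξ hη0.le (by linarith)
  exact stage2 p ρ M h s hρ hp G hG hn0 K1 K2 (badV G (ρ+1) M ε) Z ι η ξ ε b hb hdegS hZ1 hZ2 hZ3
    hdeg hε1 hξ0 hη0.le hηξ (by linarith) (by linarith) hξ1 hξ2

theorem critCol_exists {α : Type*} [Fintype α] [DecidableEq α] (k : ℕ)
    (F : SimpleGraph α) (hχ : F.chromaticNumber = ((k+1 : ℕ) : ℕ∞))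
    (hcrit : ∃ e ∈ F.edgeSet, (F.deleteEdges {e}).chromaticNumber < F.chromaticNumber) :
    ∃ (c : α → Fin k) (a b : α), CritCol F c a b := by
  obtain ⟨e, he, hlt⟩ := hcrit
  have hnc : ¬ F.Colorable k := by
    intro h
    have := SimpleGraph.chromaticNumber_le_iff_colorable.2 h
    rw [hχ] at this
    have : k + 1 ≤ k := by exact_mod_cast this
    omega
  have hcol : (F.deleteEdges {e}).Colorable k := by
    rw [hχ] at hlt
    rw [← SimpleGraph.chromaticNumber_le_iff_colorable]
    rw [Nat.cast_add, Nat.cast_one] at hlt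
    exact Order.le_of_lt_add_one hlt
  obtain ⟨c⟩ := hcol
  induction e with
  | _ a b =>
    have hab : F.Adj a b := he
    have hp : ∀ x y, F.Adj x y → s(x,y) ≠ s(a,b) → c x ≠ c y := by
      intro x y h1 h2
      exact c.valid (by rw [SimpleGraph.deleteEdges_adj]; exact ⟨h1, by simpa using h2⟩)
    refine ⟨c, a, b, hab, ?_, hp⟩
    by_contra hne
    refine hnc ⟨SimpleGraph.Coloring.mk c ?_⟩
    intro x y hxy
    by_cases h : s(x,y) = s(a,b)
    · rw [Sym2.eq_iff] at h
      rcases h with ⟨rfl, rfl⟩ | ⟨rfl, rfl⟩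
      · exact hne
      · exact fun h => hne h.symm
    · exact hp x y hxy h

theorem turan_free {α : Type*} [Fintype α] [DecidableEq α] (r k n : ℕ) (hk : 0 < k)
    (F : SimpleGraph α) [DecidableRel F.Adj] (hnc : ¬ F.Colorable k) :
    ¬ ContainsCopy (expansion r F) (turanGraph r n k) := by
  rintro ⟨f, hf, hfe⟩
  refine hnc ⟨SimpleGraph.Coloring.mk (fun x => (⟨(f (Sum.inl x) : ℕ) % k, Nat.mod_lt _ hk⟩ : Fin k)) ?_⟩
  intro x y hxy heq
  have hmem : s(x,y) ∈ F.edgeFinset := by rw [SimpleGraph.mem_edgeFinset]; exact hxy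
  have h1 := hfe _ (Finset.mem_image.2 ⟨⟨s(x,y), hmem⟩, Finset.mem_attach _ _, rfl⟩)
  rw [turanGraph, Finset.mem_filter] at h1
  have h2 := h1.2 (f (Sum.inl x)) (Finset.mem_image_of_mem _ (by simp [sym2ToFinset]))
    (f (Sum.inl y)) (Finset.mem_image_of_mem _ (by simp [sym2ToFinset])) (by simpa using heq)
  have h3 := hf h2
  rw [Sum.inl.injEq] at h3
  exact hxy.ne h3

theorem transport {n : ℕ} (G : Finset (Finset (Fin n))) (U : Finset (Fin n))
    (Q : Finset (Fin n) → Prop) [DecidablePred Q] :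
    ((Finset.univ.filter (fun e : Finset U => e.map (Function.Embedding.subtype _) ∈ G)).filter
      (fun e => Q (e.map (Function.Embedding.subtype _)))).card =
    (G.filter (fun e => e ⊆ U ∧ Q e)).card := by
  refine Finset.card_bij (fun e _ => e.map (Function.Embedding.subtype _)) ?_ ?_ ?_
  · intro e he
    simp only [Finset.mem_filter, Finset.mem_univ, true_and] at he ⊢
    refine ⟨he.1, ?_, he.2⟩
    intro x hx
    rw [Finset.mem_map] at hx
    obtain ⟨y, _, rfl⟩ := hx
    exact y.2
  · intro e _ e' _ h
    exact Finset.map_injective _ h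
  · intro e he
    rw [Finset.mem_filter] at he
    have h1 : (e.subtype (fun x => x ∈ U)).map (Function.Embedding.subtype _) = e :=
      Finset.subtype_map_of_mem (fun x hx => he.2.1 hx)
    refine ⟨e.subtype (fun x => x ∈ U), ?_, h1⟩
    simp only [Finset.mem_filter, Finset.mem_univ, true_and]
    rw [h1]; exact ⟨he.1, he.2.2⟩

theorem deg_asymp (p ρ : ℕ) (ε : ℝ) (hε : 0 < ε) :
    ∃ m1 : ℕ, ∀ m : ℕ, m1 ≤ m → ((p.choose ρ : ℝ) * (1/((p:ℝ)+1))^ρ - ε) * ((m+1 : ℕ) : ℝ)^ρ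
      ≤ ((p.choose ρ * (m/(p+1))^ρ : ℕ) : ℝ) := by
  set b : ℝ := 1/((p:ℝ)+1) with hb
  have c1 : Continuous (fun z : ℝ => (p.choose ρ : ℝ) * (b - z)^ρ) := by fun_prop
  have e1 : ∀ᶠ z in nhds (0:ℝ), (p.choose ρ : ℝ) * b^ρ - ε < (p.choose ρ : ℝ) * (b - z)^ρ := by
    refine c1.continuousAt.eventually_const_lt ?_
    simp; exact hε
  have e2 := (tendsto_one_div_add_atTop_nhds_zero_nat (𝕜 := ℝ)).eventually e1
  obtain ⟨m0, hm0⟩ := Filter.eventually_atTop.1 e2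
  refine ⟨m0 + p + 1, ?_⟩
  intro m hm
  have h1 := hm0 m (by omega)
  have hm' : (0:ℝ) < (m:ℝ) + 1 := by positivity
  push_cast
  have h2 : (b - 1/((m:ℝ)+1)) * ((m:ℝ)+1) ≤ ((m/(p+1) : ℕ) : ℝ) := by
    have h3 : m < (m/(p+1) + 1) * (p+1) := Nat.lt_mul_of_div_lt (Nat.lt_succ_self _) (by omega)
    have h3' : m + 1 ≤ (m/(p+1) + 1) * (p+1) := h3
    have h4 : (m:ℝ) + 1 ≤ (((m/(p+1) : ℕ):ℝ) + 1) * ((p:ℝ)+1) := by exact_mod_cast h3'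
    have h5 : b * ((m:ℝ)+1) ≤ ((m/(p+1) : ℕ):ℝ) + 1 := by
      rw [hb, one_div, inv_mul_le_iff₀ (by positivity)]; linarith
    have h6 : (b - 1/((m:ℝ)+1)) * ((m:ℝ)+1) = b * ((m:ℝ)+1) - 1 := by field_simp
    linarith
  have h0 : 0 ≤ b - 1/((m:ℝ)+1) := by
    rw [hb, sub_nonneg]
    refine one_div_le_one_div_of_le (by positivity) ?_
    have : p ≤ m := by omega
    have : (p:ℝ) ≤ m := by exact_mod_cast this
    linarith
  calc _ ≤ (p.choose ρ : ℝ) * (b - 1/((m:ℝ)+1))^ρ * ((m:ℝ)+1)^ρ :=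
        mul_le_mul_of_nonneg_right h1.le (by positivity)
    _ = (p.choose ρ : ℝ) * ((b - 1/((m:ℝ)+1)) * ((m:ℝ)+1))^ρ := by rw [mul_pow]; ring
    _ ≤ _ := by gcongr

theorem upper_bound {α : Type*} [Fintype α] [DecidableEq α] (p ρ : ℕ) (hρ : 1 ≤ ρ) (hp : ρ ≤ p)
    (F : SimpleGraph α) [DecidableRel F.Adj] (c : α → Fin (p+1)) (a0 b0 : α)
    (hc : CritCol F c a0 b0) :
    ∃ n1 : ℕ, ∀ n, n1 ≤ n → ∀ G : Finset (Finset (Fin n)), IsRGraph (ρ+1) G →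
      ¬ ContainsCopy (expansion (ρ+1) F) G → G.card ≤ turanNum (ρ+1) n (p+1) := by
  obtain ⟨ε, hε, n0, hst⟩ := structure_lemma p ρ hρ hp F c a0 b0 hc
  obtain ⟨m1, hm1⟩ := deg_asymp p ρ ε hε
  set L := n0 + m1 + 1 with hL
  refine ⟨L + 2^L, ?_⟩
  intro n hn G hG hfree
  by_contra hcon
  push Not at hcon
  classical
  have hex : ∃ m, ∃ U : Finset (Fin n), U.card = m ∧
      turanNum (ρ+1) m (p+1) + (n - m) + 1 ≤ (G.filter (fun e => e ⊆ U)).card := by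
    refine ⟨n, Finset.univ, by simp, ?_⟩
    have : G.filter (fun e => e ⊆ Finset.univ) = G := Finset.filter_true_of_mem (by simp)
    rw [this]; omega
  obtain ⟨U, hUm, hU⟩ := Nat.find_spec hex
  have hmin := fun m hm => Nat.find_min hex (m := m) hm
  set m := Nat.find hex with hm
  have hmn : m ≤ n := by rw [← hUm]; simpa using Finset.card_le_univ U
  have hmL : L ≤ m := by
    by_contra hlt
    push Not at hlt
    have h1 : (G.filter (fun e => e ⊆ U)).card ≤ 2^m := by
      rw [← hUm, ← Finset.card_powerset]
      refine Finset.card_le_card ?_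
      intro e he
      rw [Finset.mem_powerset]
      exact (Finset.mem_filter.1 he).2
    have h2 : 2^m ≤ 2^L := Nat.pow_le_pow_right (by norm_num) hlt.le
    omega
  obtain ⟨m', hm'⟩ : ∃ m', m = m' + 1 := ⟨m-1, by omega⟩
  have hdiff := turan_diff ρ m' (p+1) (by omega)
  rw [Nat.add_sub_cancel, ← hm'] at hdiff
  have hdegU : ∀ v ∈ U, p.choose ρ * (m'/(p+1))^ρ ≤ (G.filter (fun e => e ⊆ U ∧ v ∈ e)).card := by
    intro v hv
    have h1 := hmin m' (by omega)
    push Not at h1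
    have h2 := h1 (U.erase v) (by rw [Finset.card_erase_of_mem hv, hUm]; omega)
    have h3 : (G.filter (fun e => e ⊆ U)).card ≤ (G.filter (fun e => e ⊆ U ∧ v ∈ e)).card +
        (G.filter (fun e => e ⊆ U.erase v)).card := by
      rw [← Finset.card_filter_add_card_filter_not (s := G.filter (fun e => e ⊆ U)) (fun e => v ∈ e)]
      rw [Finset.filter_filter, Finset.filter_filter]
      refine Nat.add_le_add_left (Finset.card_le_card ?_) _
      intro e he
      rw [Finset.mem_filter] at he ⊢
      refine ⟨he.1, ?_⟩
      intro x hx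
      rw [Finset.mem_erase]
      exact ⟨fun h => he.2.2 (h ▸ hx), he.2.1 hx⟩
    omega
  set G' : Finset (Finset U) := Finset.univ.filter
    (fun e : Finset U => e.map (Function.Embedding.subtype _) ∈ G) with hG'
  have hcardU : Fintype.card U = m := by rw [Fintype.card_coe, hUm]
  have hG'r : IsRGraph (ρ+1) G' := by
    intro e he
    rw [hG', Finset.mem_filter] at he
    have := hG _ he.2
    rwa [Finset.card_map] at this
  have hG'free : ¬ ContainsCopy (expansion (ρ+1) F) G' := by
    rintro ⟨f, hf, hfe⟩
    refine hfree ⟨fun x => (f x : Fin n), fun x y h => hf (Subtype.ext h), ?_⟩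
    intro e he
    have h1 := hfe e he
    rw [hG', Finset.mem_filter] at h1
    have h2 := h1.2
    rw [Finset.map_eq_image, Finset.image_image] at h2
    exact h2
  have hG'card : G'.card = (G.filter (fun e => e ⊆ U)).card := by
    have := transport G U (fun _ => True)
    simpa [hG'] using this
  obtain ⟨χ, hχ⟩ := hst U G' (by omega) hG'r hG'free (by
    intro v
    have h1 := transport G U (fun e => (v : Fin n) ∈ e)
    have h2 : (G'.filter (fun e => v ∈ e)).card = (G.filter (fun e => e ⊆ U ∧ (v : Fin n) ∈ e)).card := by
      rw [← h1]
      congr 1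
      ext e
      simp [hG']
    rw [h2, hcardU, hm']
    exact (hm1 m' (by omega)).trans (by exact_mod_cast hdegU v v.2))
  have h5 := kpartite_le (ρ+1) (p+1) (by omega) (by omega) G' hG'r χ hχ
  rw [hcardU] at h5
  omega

theorem final_thm {α : Type*} [Fintype α] [DecidableEq α]
    (r ℓ : ℕ) (hr : 2 ≤ r) (hrl : r < ℓ)
    (F : SimpleGraph α) [DecidableRel F.Adj] (hχ : F.chromaticNumber = (ℓ : ℕ∞))
    (hcrit : ∃ e ∈ F.edgeSet, (F.deleteEdges {e}).chromaticNumber < F.chromaticNumber) :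
    ∃ n₀ : ℕ, ∀ n : ℕ, n₀ ≤ n → exNum r n (expansion r F) = turanNum r n (ℓ - 1) := by
  obtain ⟨ρ, rfl⟩ : ∃ ρ, r = ρ + 1 := ⟨r-1, by omega⟩
  obtain ⟨p, rfl⟩ : ∃ p, ℓ = p + 1 + 1 := ⟨ℓ-2, by omega⟩
  rw [Nat.add_sub_cancel]
  obtain ⟨c, a, b, hc⟩ := critCol_exists (p+1) F hχ hcrit
  have hnc : ¬ F.Colorable (p+1) := by
    intro h
    have := SimpleGraph.chromaticNumber_le_iff_colorable.2 h
    rw [hχ] at this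
    have : p + 1 + 1 ≤ p + 1 := by exact_mod_cast this
    omega
  obtain ⟨n1, hn1⟩ := upper_bound p ρ (by omega) (by omega) F c a b hc
  refine ⟨n1, ?_⟩
  intro n hn
  unfold exNum
  have hub : ∀ m ∈ {m | ∃ G : Finset (Finset (Fin n)), IsRGraph (ρ+1) G ∧
      ¬ ContainsCopy (expansion (ρ+1) F) G ∧ G.card = m}, m ≤ turanNum (ρ+1) n (p+1) := by
    rintro m ⟨G, h1, h2, rfl⟩
    exact hn1 n hn G h1 h2
  have hmem : turanNum (ρ+1) n (p+1) ∈ {m | ∃ G : Finset (Finset (Fin n)), IsRGraph (ρ+1) G ∧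
      ¬ ContainsCopy (expansion (ρ+1) F) G ∧ G.card = m} := by
    refine ⟨turanGraph (ρ+1) n (p+1), ?_, turan_free _ _ _ (by omega) F hnc, rfl⟩
    intro e he
    rw [turanGraph, Finset.mem_filter, Finset.mem_powersetCard] at he
    exact he.1.2
  exact le_antisymm (csSup_le ⟨_, hmem⟩ hub) (le_csSup ⟨_, hub⟩ hmem)

/-- **Theorem (edge-critical case).**  Given a 2-graph `F` with `χ(F) = ℓ > r ≥ 2`, if `F` is
edge-critical (deleting some edge lowers the chromatic number), then for all sufficiently
large `n`, `ex(n, H_F^(r)) = t_r(n, ℓ-1)`. -/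
theorem turan_number_expansion_edge_critical {α : Type*} [Fintype α] [DecidableEq α]
    (r ℓ : ℕ) (hr : 2 ≤ r) (hrl : r < ℓ)
    (F : SimpleGraph α) [DecidableRel F.Adj] (hχ : F.chromaticNumber = (ℓ : ℕ∞))
    (hcrit : ∃ e ∈ F.edgeSet, (F.deleteEdges {e}).chromaticNumber < F.chromaticNumber) :
    ∃ n₀ : ℕ, ∀ n : ℕ, n₀ ≤ n → exNum r n (expansion r F) = turanNum r n (ℓ - 1) := by
  exact final_thm r ℓ hr hrl F hχ hcrit
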